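/- arXiv:2403.09989 — 2 statements merged into one kernel-verified Lean document; each statement's English description precedes it below -/
import Mathlib

section
/- Two-dimensional late-time Duhamel estimate: fix 2 < r < ∞ and set q = 2r/(r−2). For any t > 0, any measurable interval I ⊆ [t/2, t], and any measurable u : I × ℝ² → ℂ, one has ‖ ∫_I e^{i(t−s)Δ} (|u|²u)(s) ds ‖_{L^r_x(ℝ²)} ≤ C t^{−2(1/2−1/r)} ( sup_{s ∈ I} s^{2(1/2−1/r)} ‖u(s)‖_{L^r_x(ℝ²)} ) ‖u‖²_{L^{r,2}_s L^q_x(I×ℝ²)}, with C depending only on r. -/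
open MeasureTheory Set
open scoped ENNReal Real

noncomputable section

/-- The free Schrödinger propagator `e^{itΔ}` acting on functions on a `d`-dimensional space:
for `t ≠ 0`, `(e^{itΔ}f)(x) = (4πit)^{-d/2} ∫ e^{i|x-y|²/(4t)} f(y) dy`, and `e^{i0Δ}f = f`. -/
def schrod {E : Type*} [NormedAddCommGroup E] [MeasureSpace E] (d : ℕ) (t : ℝ) (f : E → ℂ) :
    E → ℂ :=
  if t = 0 then f
  else fun x =>
    (4 * (Real.pi : ℂ) * Complex.I * (t : ℂ)) ^ (-(d : ℂ) / 2) *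
      ∫ y, Complex.exp (Complex.I * ((‖x - y‖ ^ 2 : ℝ) : ℂ) / (4 * (t : ℂ))) * f y

/-- Mixed Lebesgue norm `‖u‖_{L^p_t L^q_x (I × space)}`. -/
def mixedNorm {α : Type*} [MeasurableSpace α] (ν : Measure α) (I : Set ℝ) (p q : ℝ≥0∞)
    (u : ℝ → α → ℂ) : ℝ≥0∞ :=
  if p = ∞ then essSup (fun t => eLpNorm (u t) q ν) (volume.restrict I)
  else (∫⁻ t in I, eLpNorm (u t) q ν ^ p.toReal) ^ (1 / p.toReal)

/-- Lorentz quasinorm `p^{1/q} ‖ λ · ν({g > λ})^{1/p} ‖_{L^q((0,∞), dλ/λ)}`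
for an `ℝ≥0∞`-valued function `g`. -/
def lorentzNorm {α : Type*} [MeasurableSpace α] (ν : Measure α) (p q : ℝ≥0∞)
    (g : α → ℝ≥0∞) : ℝ≥0∞ :=
  if q = ∞ then
    ⨆ l ∈ Set.Ioi (0 : ℝ), ENNReal.ofReal l * ν {x | ENNReal.ofReal l < g x} ^ p⁻¹.toReal
  else
    (p * ∫⁻ l in Set.Ioi (0 : ℝ),
        (ENNReal.ofReal l * ν {x | ENNReal.ofReal l < g x} ^ p⁻¹.toReal) ^ q.toReal /
          ENNReal.ofReal l) ^ q⁻¹.toReal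

/-- Lorentz quasinorm `‖f‖_{L^{p,q}}` of a scalar function. -/
def lorentzNormC {α : Type*} [MeasurableSpace α] (ν : Measure α) (p q : ℝ≥0∞)
    (f : α → ℂ) : ℝ≥0∞ :=
  lorentzNorm ν p q fun x => (‖f x‖₊ : ℝ≥0∞)

/-- Lorentz-in-time mixed norm `‖u‖_{L^{p,q}_t L^r_x (I × space)}`. -/
def lorentzMixedNorm {α : Type*} [MeasurableSpace α] (ν : Measure α) (I : Set ℝ)
    (p q r : ℝ≥0∞) (u : ℝ → α → ℂ) : ℝ≥0∞ :=
  lorentzNorm (volume.restrict I) p q fun t => eLpNorm (u t) r ν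

/-- The nonlinearity `|f|^a f`. -/
def nonlin {E : Type*} (a : ℝ) (f : E → ℂ) : E → ℂ := fun x => ((‖f x‖ ^ a : ℝ) : ℂ) * f x


open FourierTransform SchwartzMap

abbrev V2 := EuclideanSpace ℝ (Fin 2)

lemma aux_planch (f : V2 → ℂ) (h1 : Integrable f) (h2 : MemLp f 2) :
    eLpNorm (𝓕 f) 2 volume = eLpNorm f 2 volume := by
  set F := h2.toLp f with hF
  have hcont : Continuous (𝓕 f) := by
    exact VectorFourier.fourierIntegral_continuous Real.continuous_fourierChar
      (by exact continuous_inner) h1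
  have key : ∀ᵐ x, 𝓕 f x = (𝓕 F : Lp (α := V2) ℂ 2 volume) x := by
    apply ae_eq_of_integral_contDiff_smul_eq
    · exact hcont.locallyIntegrable
    · exact (Lp.memLp (𝓕 F : Lp (α := V2) ℂ 2 volume)).locallyIntegrable (by norm_num)
    intro g hg hgs
    have hgs' : HasCompactSupport (fun x => (g x : ℂ)) := hgs.comp_left (g := fun y : ℝ => (y:ℂ)) (by simp)
    have hg' : ContDiff ℝ (⊤ : ℕ∞) (fun x => (g x : ℂ)) := Complex.ofRealCLM.contDiff.comp hg
    set φ : 𝓢(V2, ℂ) := hgs'.toSchwartzMap hg' with hφ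
    have e1 := congrArg (fun T => T φ) (Lp.fourier_toTemperedDistribution_eq F)
    simp only [TemperedDistribution.fourier_apply, Lp.toTemperedDistribution_apply] at e1
    have e2 : ∀ x, g x • (𝓕 F : Lp (α := V2) ℂ 2 volume) x = φ x • (𝓕 F : Lp (α := V2) ℂ 2 volume) x := by
      intro x; simp [hφ]
    have e3 : ∀ x, g x • (𝓕 f) x = φ x • (𝓕 f) x := by
      intro x; simp [hφ]
    simp only [e2, e3]
    rw [← e1]
    have e4 : ∫ x, (𝓕 φ) x • F x = ∫ x, (𝓕 φ) x • f x := by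
      apply integral_congr_ae
      filter_upwards [h2.coeFn_toLp] with x hx
      rw [hF, hx]
    rw [e4]
    have := VectorFourier.integral_fourierIntegral_smul_eq_flip (L := innerₗ V2) (μ := volume) (ν := volume)
      Real.continuous_fourierChar (by exact continuous_inner) (φ.integrable) h1
    rw [SchwartzMap.fourier_coe]
    rw [flip_innerₗ] at this
    exact this.symm
  rw [eLpNorm_congr_ae key, ← eLpNorm_congr_ae h2.coeFn_toLp]
  have := Lp.norm_fourier_eq F
  rw [Lp.norm_def, Lp.norm_def] at this
  exact (ENNReal.toReal_eq_toReal_iff' (Lp.eLpNorm_ne_top _) (Lp.eLpNorm_ne_top _)).1 this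

lemma aux_schrod_linf (τ : ℝ) (hτ : τ ≠ 0) (f : V2 → ℂ) (x : V2) :
    ‖schrod 2 τ f x‖ₑ ≤ ENNReal.ofReal (1 / (4 * π * |τ|)) * ∫⁻ y, ‖f y‖ₑ := by
  simp only [schrod, hτ, if_false]
  rw [enorm_mul]
  gcongr
  · have : -((2:ℕ):ℂ)/2 = -1 := by norm_num
    rw [this, Complex.cpow_neg_one, ← ofReal_norm]
    apply le_of_eq
    congr 1
    simp [abs_of_pos Real.pi_pos]
  · refine (enorm_integral_le_lintegral_enorm _).trans (le_of_eq ?_)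
    congr 1; ext y
    rw [enorm_mul]
    have : Complex.I * ((‖x - y‖ ^ 2 : ℝ) : ℂ) / (4 * (τ : ℂ)) = ((‖x - y‖ ^ 2 / (4 * τ) : ℝ) : ℂ) * Complex.I := by
      push_cast; ring
    rw [this, ← ofReal_norm, Complex.norm_exp_ofReal_mul_I]
    simp

lemma aux_schrod_eq (τ : ℝ) (hτ : τ ≠ 0) (f : V2 → ℂ) (x : V2) :
    ‖schrod 2 τ f x‖ₑ = ENNReal.ofReal (1 / (4 * π * |τ|)) *
      ‖𝓕 (fun y => Complex.exp (((‖y‖ ^ 2 / (4 * τ) : ℝ) : ℂ) * Complex.I) * f y) ((1 / (4 * π * τ)) • x)‖ₑ := by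
  simp only [schrod, hτ, if_false]
  rw [enorm_mul]
  congr 1
  · have : -((2:ℕ):ℂ)/2 = -1 := by norm_num
    rw [this, Complex.cpow_neg_one, ← ofReal_norm]
    congr 1
    simp [abs_of_pos Real.pi_pos]
  · rw [Real.fourier_eq']
    have : ∀ y, Complex.exp (Complex.I * ((‖x - y‖ ^ 2 : ℝ) : ℂ) / (4 * (τ : ℂ))) * f y =
       Complex.exp (((‖x‖ ^ 2 / (4 * τ) : ℝ) : ℂ) * Complex.I) * (Complex.exp (((-2 * π * inner ℝ y ((1 / (4 * π * τ)) • x) : ℝ) : ℂ) * Complex.I) • (Complex.exp (((‖y‖ ^ 2 / (4 * τ) : ℝ) : ℂ) * Complex.I) * f y)) := by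
      intro y
      rw [smul_eq_mul, ← mul_assoc, ← mul_assoc, ← Complex.exp_add, ← Complex.exp_add]
      congr 2
      rw [norm_sub_sq_real, inner_smul_right, real_inner_comm]
      have h1 : (τ:ℂ) ≠ 0 := by exact_mod_cast hτ
      have h2 : (π:ℂ) ≠ 0 := by exact_mod_cast Real.pi_ne_zero
      push_cast
      field_simp
      ring
    simp_rw [this]
    rw [integral_const_mul, enorm_mul, ← ofReal_norm, Complex.norm_exp_ofReal_mul_I]
    simp

lemma aux_schrod_l2 (τ : ℝ) (hτ : τ ≠ 0) (f : V2 → ℂ) (h1 : Integrable f) (h2 : MemLp f 2) :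
    ∫⁻ x, ‖schrod 2 τ f x‖ₑ ^ (2:ℝ) = ∫⁻ x, ‖f x‖ₑ ^ (2:ℝ) := by
  set g : V2 → ℂ := fun y => Complex.exp (((‖y‖ ^ 2 / (4 * τ) : ℝ) : ℂ) * Complex.I) * f y with hg
  have hn : ∀ y, ‖g y‖ = ‖f y‖ := by
    intro y
    rw [hg]; simp only [norm_mul]; rw [Complex.norm_exp_ofReal_mul_I, one_mul]
  have hgm : AEStronglyMeasurable g := by
    apply AEStronglyMeasurable.mul _ h1.1
    apply Continuous.aestronglyMeasurable
    fun_prop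
  have hg1 : Integrable g := (MeasureTheory.integrable_congr' hgm h1.1 (ae_of_all _ hn)).2 h1
  have hg2 : MemLp g 2 := (memLp_congr_norm hgm h1.1 (ae_of_all _ hn)).2 h2
  have hp := aux_planch g hg1 hg2
  rw [eLpNorm_congr_norm_ae (ae_of_all _ hn)] at hp
  rw [eLpNorm_eq_lintegral_rpow_enorm_toReal (by norm_num) (by norm_num),
    eLpNorm_eq_lintegral_rpow_enorm_toReal (by norm_num) (by norm_num)] at hp
  have hp' := congrArg (fun z => z ^ (2:ℝ)) hp
  simp only [← ENNReal.rpow_mul] at hp'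
  norm_num at hp'
  simp_rw [aux_schrod_eq τ hτ f, ENNReal.mul_rpow_of_nonneg _ _ (by norm_num : (0:ℝ) ≤ 2)]
  rw [lintegral_const_mul' _ _ (ENNReal.rpow_ne_top_of_nonneg (by norm_num) ENNReal.ofReal_ne_top)]
  set R := 1 / (4 * π * τ) with hR
  have hR0 : R ≠ 0 := by positivity
  have := lintegral_map_equiv (μ := (volume : Measure V2)) (fun x => ‖𝓕 g x‖ₑ ^ (2:ℝ)) (Homeomorph.smulOfNeZero R hR0).toMeasurableEquiv
  simp only [Homeomorph.toMeasurableEquiv_coe, Homeomorph.smulOfNeZero_apply] at this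
  rw [← this]
  have hm := Measure.map_addHaar_smul (volume : Measure V2) hR0
  rw [hm, lintegral_smul_measure]
  have e : (fun x => ‖𝓕 g x‖ₑ ^ (2:ℝ)) = (fun x => ‖𝓕 g x‖ₑ ^ 2) := by ext; simp
  have e' : (fun x => ‖f x‖ₑ ^ (2:ℝ)) = (fun x => ‖f x‖ₑ ^ 2) := by ext; simp
  simp only [e, e'] 
  rw [hp', smul_eq_mul, ← mul_assoc, ENNReal.ofReal_rpow_of_nonneg (by positivity) (by norm_num), ← ENNReal.ofReal_mul (by positivity)]
  have : (1 / (4 * π * |τ|)) ^ (2:ℝ) * |(R ^ Module.finrank ℝ V2)⁻¹| = 1 := by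
    rw [finrank_euclideanSpace_fin, hR, abs_inv, abs_pow, abs_div, abs_mul, abs_one, abs_of_pos (by positivity : 0 < 4 * π)]
    have : |τ| ≠ 0 := abs_ne_zero.2 hτ
    rw [Real.rpow_ofNat]
    field_simp
  rw [this]; simp

lemma aux_big (r : ℝ) (hr : 2 < r) (A N l : ℝ) (hA : 0 < A) (hN : 0 < N) (hl : 0 < l)
    (f : V2 → ℂ) (hNf : ∫⁻ x, ‖f x‖ₑ ^ (r / (r - 1)) = ENNReal.ofReal N) :
    ENNReal.ofReal A * ∫⁻ x, ‖{x | (2 * A * N / l) ^ (r - 1) < ‖f x‖}.indicator f x‖ₑ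
      ≤ ENNReal.ofReal (l / 2) := by
  have hr1 : 0 < r - 1 := by linarith
  have key : ∀ x, ‖{x | (2 * A * N / l) ^ (r - 1) < ‖f x‖}.indicator f x‖ₑ ≤
      ENNReal.ofReal (l / (2 * A * N)) * ‖f x‖ₑ ^ (r / (r - 1)) := by
    intro x
    by_cases hx : (2 * A * N / l) ^ (r - 1) < ‖f x‖
    · rw [indicator_of_mem (by exact hx), ← ofReal_norm, ENNReal.ofReal_rpow_of_nonneg (norm_nonneg _) (by positivity),
        ← ENNReal.ofReal_mul (by positivity)]
      apply ENNReal.ofReal_le_ofReal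
      have hpos : 0 < ‖f x‖ := lt_of_le_of_lt (by positivity) hx
      have e : r / (r - 1) = 1 + 1 / (r - 1) := by field_simp; ring
      rw [e, Real.rpow_add hpos, Real.rpow_one]
      have h2 : 2 * A * N / l ≤ ‖f x‖ ^ (1 / (r - 1)) := by
        have := Real.rpow_le_rpow (by positivity) hx.le (by positivity : 0 ≤ 1 / (r - 1))
        rwa [← Real.rpow_mul (by positivity), mul_one_div_cancel hr1.ne', Real.rpow_one] at this
      calc ‖f x‖ = l / (2 * A * N) * (‖f x‖ * (2 * A * N / l)) := by field_simp
        _ ≤ _ := by gcongr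
    · rw [indicator_of_notMem (by exact hx)]; simp
  calc _ ≤ ENNReal.ofReal A * ∫⁻ x, ENNReal.ofReal (l / (2 * A * N)) * ‖f x‖ₑ ^ (r / (r - 1)) := by
        gcongr with x; exact key x
    _ = ENNReal.ofReal (l / 2) := by
        rw [lintegral_const_mul' _ _ ENNReal.ofReal_ne_top, hNf, ← ENNReal.ofReal_mul (by positivity), ← ENNReal.ofReal_mul (by positivity)]
        congr 1; field_simp

lemma aux_meas (r : ℝ) (hr : 2 < r) (A : ℝ) (hA : 0 < A) (T : (V2 → ℂ) → V2 → ℂ)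
    (hadd : ∀ f g, Integrable f → Integrable g → ∀ x, T (f + g) x = T f x + T g x)
    (hinf : ∀ f x, ‖T f x‖ₑ ≤ ENNReal.ofReal A * ∫⁻ y, ‖f y‖ₑ)
    (h2 : ∀ f, Integrable f → MemLp f 2 → ∫⁻ x, ‖T f x‖ₑ ^ (2:ℝ) ≤ ∫⁻ x, ‖f x‖ₑ ^ (2:ℝ))
    (hmeas : ∀ f, Measurable f → Measurable (T f))
    (f : V2 → ℂ) (hf : Measurable f) (hfi : Integrable f) (N : ℝ) (hN : 0 < N)
    (hNf : ∫⁻ x, ‖f x‖ₑ ^ (r / (r - 1)) = ENNReal.ofReal N) (l : ℝ) (hl : 0 < l) :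
    volume {x | l < ‖T f x‖} ≤ ENNReal.ofReal (4 / l ^ 2) *
      ∫⁻ x, {x | ‖f x‖ ≤ (2 * A * N / l) ^ (r - 1)}.indicator (fun x => ‖f x‖ₑ ^ (2:ℝ)) x := by
  set h := (2 * A * N / l) ^ (r - 1) with hh
  set fb := {x | h < ‖f x‖}.indicator f with hfb
  set fs := {x | ‖f x‖ ≤ h}.indicator f with hfs
  have mb : MeasurableSet {x | h < ‖f x‖} := measurableSet_lt measurable_const hf.norm
  have ms : MeasurableSet {x | ‖f x‖ ≤ h} := measurableSet_le hf.norm measurable_const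
  have hsum : f = fb + fs := by
    ext x
    by_cases hx : h < ‖f x‖
    · simp [hfb, hfs, hx, indicator]
    · simp [hfb, hfs, hx, indicator, not_lt.1 hx]
  have hfbi : Integrable fb := hfi.indicator mb
  have hfsi : Integrable fs := hfi.indicator ms
  have hfs2 : MemLp fs 2 := by
    rw [memLp_two_iff_integrable_sq_norm hfsi.1]
    refine Integrable.mono' (hfsi.norm.const_mul h) (hfsi.1.norm.pow 2) (ae_of_all _ fun x => ?_)
    rw [Real.norm_of_nonneg (by positivity), pow_two]
    gcongr
    by_cases hx : ‖f x‖ ≤ h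
    · simp [hfs, hx]
    · simp [hfs, hx]; rw [hh]; positivity
  have hT : ∀ x, T f x = T fb x + T fs x := by
    intro x
    conv_lhs => rw [hsum]
    exact hadd _ _ hfbi hfsi x
  have hTb : ∀ x, ‖T fb x‖ ≤ l / 2 := by
    intro x
    have := (hinf fb x).trans (aux_big r hr A N l hA hN hl f hNf)
    rw [← ofReal_norm] at this
    exact (ENNReal.ofReal_le_ofReal_iff (by positivity)).1 this
  have hsub : {x | l < ‖T f x‖} ⊆ {x | ENNReal.ofReal ((l / 2) ^ 2) ≤ ‖T fs x‖ₑ ^ (2:ℝ)} := by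
    intro x hx
    simp only [mem_ofPred_eq] at hx ⊢
    have : l / 2 ≤ ‖T fs x‖ := by
      have := norm_add_le (T fb x) (T fs x)
      rw [← hT] at this
      linarith [hTb x]
    rw [← ofReal_norm, ENNReal.ofReal_rpow_of_nonneg (norm_nonneg _) (by norm_num)]
    apply ENNReal.ofReal_le_ofReal
    rw [Real.rpow_ofNat]
    gcongr
  calc volume {x | l < ‖T f x‖} ≤ _ := measure_mono hsub
    _ ≤ (∫⁻ x, ‖T fs x‖ₑ ^ (2:ℝ)) / ENNReal.ofReal ((l / 2) ^ 2) := by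
        apply meas_ge_le_lintegral_div
        · exact ((hmeas fs (hf.indicator ms)).enorm.pow_const _).aemeasurable
        · simp; positivity
        · simp
    _ ≤ (∫⁻ x, ‖fs x‖ₑ ^ (2:ℝ)) / ENNReal.ofReal ((l / 2) ^ 2) := by
        exact ENNReal.div_le_div_right (h2 fs hfsi hfs2) _
    _ = _ := by
        rw [ENNReal.div_eq_inv_mul, ← ENNReal.ofReal_inv_of_pos (by positivity)]
        congr 2
        · field_simp; norm_num
        · ext x
          by_cases hx : ‖f x‖ ≤ h
          · simp [hfs, hx, indicator]
          · simp [hfs, hx, indicator]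

lemma aux_inner (r : ℝ) (hr : 2 < r) (M : ℝ) (hM : 0 < M) (a : ℝ) (ha : 0 < a) :
    ∫⁻ l in Ioi (0:ℝ), (if a ≤ (M / l) ^ (r - 1) then ENNReal.ofReal (4 * l ^ (r - 3)) * ENNReal.ofReal (a ^ (2:ℝ)) else 0)
      ≤ ENNReal.ofReal (4 / (r - 2) * M ^ (r - 2) * a ^ (r / (r - 1))) := by
  have hr1 : 0 < r - 1 := by linarith
  set L := M * a ^ (-(1 / (r - 1))) with hL
  have hLpos : 0 < L := by positivity
  calc _ ≤ ∫⁻ l in Ioi (0:ℝ), (Ioc 0 L).indicator (fun l => ENNReal.ofReal (4 * a ^ (2:ℝ) * l ^ (r - 3))) l := by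
        apply setLIntegral_mono' measurableSet_Ioi
        intro l hl
        have hl : 0 < l := hl
        split_ifs with h
        · have : l ∈ Ioc 0 L := by
            refine ⟨hl, ?_⟩
            have := Real.rpow_le_rpow (by positivity) h (by positivity : 0 ≤ 1 / (r - 1))
            rw [← Real.rpow_mul (by positivity), mul_one_div_cancel hr1.ne', Real.rpow_one] at this
            rw [hL, Real.rpow_neg ha.le, ← div_eq_mul_inv, le_div_iff₀ (by positivity)]
            rw [le_div_iff₀ hl] at this
            linarith
          rw [indicator_of_mem this, ← ENNReal.ofReal_mul (by positivity)]
          apply le_of_eq; congr 1; ring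
        · simp
    _ ≤ ∫⁻ l, (Ioc 0 L).indicator (fun l => ENNReal.ofReal (4 * a ^ (2:ℝ) * l ^ (r - 3))) l := setLIntegral_le_lintegral _ _
    _ = ∫⁻ l in Ioc 0 L, ENNReal.ofReal (4 * a ^ (2:ℝ) * l ^ (r - 3)) := lintegral_indicator measurableSet_Ioc _
    _ = ENNReal.ofReal (∫ l in Ioc 0 L, 4 * a ^ (2:ℝ) * l ^ (r - 3)) := by
        rw [ofReal_integral_eq_lintegral_ofReal]
        · apply Integrable.const_mul
          have := intervalIntegral.intervalIntegrable_rpow' (a := 0) (b := L) (by linarith : -1 < r - 3)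
          rwa [intervalIntegrable_iff_integrableOn_Ioc_of_le hLpos.le] at this
        · filter_upwards [ae_restrict_mem measurableSet_Ioc] with l hl
          have := hl.1
          positivity
    _ = _ := by
        congr 1
        rw [integral_const_mul, ← intervalIntegral.integral_of_le hLpos.le, integral_rpow (Or.inl (by linarith)),
          Real.zero_rpow (by linarith)]
        rw [hL, Real.mul_rpow hM.le (by positivity), ← Real.rpow_mul ha.le]
        have e1 : r - 3 + 1 = r - 2 := by ring
        have e2 : r / (r - 1) = 2 + (-(1 / (r - 1)) * (r - 2)) := by field_simp; ring
        rw [e1, e2, Real.rpow_add ha]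
        ring

lemma aux_interp (r : ℝ) (hr : 2 < r) (A : ℝ) (hA : 0 < A) (T : (V2 → ℂ) → V2 → ℂ)
    (hadd : ∀ f g, Integrable f → Integrable g → ∀ x, T (f + g) x = T f x + T g x)
    (hinf : ∀ f x, ‖T f x‖ₑ ≤ ENNReal.ofReal A * ∫⁻ y, ‖f y‖ₑ)
    (h2 : ∀ f, Integrable f → MemLp f 2 → ∫⁻ x, ‖T f x‖ₑ ^ (2:ℝ) ≤ ∫⁻ x, ‖f x‖ₑ ^ (2:ℝ))
    (hmeas : ∀ f, Measurable f → Measurable (T f))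
    (f : V2 → ℂ) (hf : Measurable f) (hfi : Integrable f) :
    ∫⁻ x, ‖T f x‖ₑ ^ r ≤ ENNReal.ofReal (r * (4 / (r - 2)) * 2 ^ (r - 2) * A ^ (r - 2)) *
      (∫⁻ x, ‖f x‖ₑ ^ (r / (r - 1))) ^ (r - 1) := by
  have hr1 : 0 < r - 1 := by linarith
  have hr2 : 0 < r - 2 := by linarith
  rcases eq_or_ne (∫⁻ x, ‖f x‖ₑ ^ (r / (r - 1))) ∞ with htop | htop
  · rw [htop, ENNReal.top_rpow_of_pos hr1, ENNReal.mul_top]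
    · exact le_top
    · simp; positivity
  rcases eq_or_ne (∫⁻ x, ‖f x‖ₑ ^ (r / (r - 1))) 0 with h0 | h0
  · have : ∫⁻ x, ‖f x‖ₑ = 0 := by
      rw [lintegral_eq_zero_iff (hf.enorm.pow_const _)] at h0
      rw [lintegral_eq_zero_iff hf.enorm]
      filter_upwards [h0] with x hx
      have : 0 < r / (r-1) := by positivity
      simpa [this, this.le, not_lt.2 this.le] using hx
    have hz : ∀ x, ‖T f x‖ₑ = 0 := by
      intro x; have := hinf f x; simp_all
    simp [hz, (by linarith : 0 < r)]
  set N := (∫⁻ x, ‖f x‖ₑ ^ (r / (r - 1))).toReal with hNdef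
  have hN : 0 < N := ENNReal.toReal_pos h0 htop
  have hNf : ∫⁻ x, ‖f x‖ₑ ^ (r / (r - 1)) = ENNReal.ofReal N := (ENNReal.ofReal_toReal htop).symm
  have hM : 0 < 2 * A * N := by positivity
  calc ∫⁻ x, ‖T f x‖ₑ ^ r = ∫⁻ x, ENNReal.ofReal (‖T f x‖ ^ r) := by
        congr 1; ext x; rw [← ofReal_norm, ENNReal.ofReal_rpow_of_nonneg (norm_nonneg _) (by linarith)]
    _ = ENNReal.ofReal r * ∫⁻ l in Ioi (0:ℝ), volume {x | l < ‖T f x‖} * ENNReal.ofReal (l ^ (r - 1)) := by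
        apply lintegral_rpow_eq_lintegral_meas_lt_mul
        · exact ae_of_all _ fun x => norm_nonneg _
        · exact (hmeas f hf).norm.aemeasurable
        · linarith
    _ ≤ ENNReal.ofReal r * ∫⁻ l in Ioi (0:ℝ), ∫⁻ x, (if ‖f x‖ ≤ (2 * A * N / l) ^ (r - 1) then ENNReal.ofReal (4 * l ^ (r - 3)) * ENNReal.ofReal (‖f x‖ ^ (2:ℝ)) else 0) := by
        gcongr ENNReal.ofReal r * ?_
        apply setLIntegral_mono' measurableSet_Ioi
        intro l hl
        have hl : 0 < l := hl
        refine (mul_le_mul_left (aux_meas r hr A hA T hadd hinf h2 hmeas f hf hfi N hN hNf l hl) _).trans ?_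
        rw [mul_comm, ← mul_assoc, ← ENNReal.ofReal_mul (by positivity), ← lintegral_const_mul' _ _ (by simp)]
        apply le_of_eq
        congr 1; ext x
        by_cases hx : ‖f x‖ ≤ (2 * A * N / l) ^ (r - 1)
        · simp only [indicator, mem_ofPred_eq, hx, if_true]
          rw [← ofReal_norm, ENNReal.ofReal_rpow_of_nonneg (norm_nonneg _) (by norm_num)]
          congr 2
          rw [show r - 1 = r - 3 + 2 by ring, Real.rpow_add hl, Real.rpow_ofNat]
          field_simp
        · simp [indicator, hx]
    _ = ENNReal.ofReal r * ∫⁻ x, ∫⁻ l in Ioi (0:ℝ), (if ‖f x‖ ≤ (2 * A * N / l) ^ (r - 1) then ENNReal.ofReal (4 * l ^ (r - 3)) * ENNReal.ofReal (‖f x‖ ^ (2:ℝ)) else 0) := by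
        congr 1
        apply lintegral_lintegral_swap
        apply Measurable.aemeasurable
        apply Measurable.ite
        · apply measurableSet_le <;> fun_prop
        · fun_prop
        · fun_prop
    _ ≤ ENNReal.ofReal r * ∫⁻ x, ENNReal.ofReal (4 / (r - 2) * (2 * A * N) ^ (r - 2)) * ‖f x‖ₑ ^ (r / (r - 1)) := by
        gcongr with x
        rcases eq_or_ne (f x) 0 with hx | hx
        · simp [hx]
        · refine (aux_inner r hr _ hM _ (norm_pos_iff.2 hx)).trans (le_of_eq ?_)
          rw [← ofReal_norm, ENNReal.ofReal_rpow_of_nonneg (norm_nonneg _) (by positivity), ← ENNReal.ofReal_mul (by positivity)]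
    _ = _ := by
        rw [lintegral_const_mul' _ _ ENNReal.ofReal_ne_top, hNf, ENNReal.ofReal_rpow_of_pos hN, ← ENNReal.ofReal_mul (by positivity), ← ENNReal.ofReal_mul (by positivity), ← ENNReal.ofReal_mul (by positivity)]
        congr 1
        rw [Real.mul_rpow (by positivity) hN.le, Real.mul_rpow (by positivity) hA.le, show r - 1 = r - 2 + 1 by ring, Real.rpow_add hN, Real.rpow_one]
        ring

lemma aux_mink (r : ℝ) (hr : 2 < r) (μ : Measure ℝ) [SFinite μ] (F : ℝ → V2 → ℝ≥0∞)
    (hF : Measurable (Function.uncurry F)) :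
    (∫⁻ x, (∫⁻ s, F s x ∂μ) ^ r) ^ (1 / r) ≤ ∫⁻ s, (∫⁻ x, F s x ^ r) ^ (1 / r) ∂μ := by
  have hr0 : 0 < r := by linarith
  have hr1 : 0 < r - 1 := by linarith
  set G : V2 → ℝ≥0∞ := fun x => ∫⁻ s, F s x ∂μ with hG
  set M := ∫⁻ s, (∫⁻ x, F s x ^ r) ^ (1 / r) ∂μ with hM
  have hGm : Measurable G := by
    apply Measurable.lintegral_prod_right' (f := fun p : V2 × ℝ => F p.2 p.1)
    exact hF.comp measurable_swap
  have main : ∀ H : V2 → ℝ≥0∞, Measurable H → (∀ x, H x ≤ G x) → ∫⁻ x, H x ^ r ≠ ∞ →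
      ∫⁻ x, H x ^ r ≤ M ^ r := by
    intro H hH hle hfin
    have hconj : (r / (r-1)).HolderConjugate r := by
      rw [Real.holderConjugate_iff]
      constructor
      · rw [lt_div_iff₀ hr1]; linarith
      · field_simp; ring
    have h1 : ∫⁻ x, H x ^ r ≤ (∫⁻ x, H x ^ r) ^ (1 / (r / (r-1))) * M := by
      calc ∫⁻ x, H x ^ r ≤ ∫⁻ x, H x ^ (r - 1) * G x := by
            gcongr with x
            conv_lhs => rw [show r = (r - 1) + 1 by ring, ENNReal.rpow_add_of_nonneg _ _ hr1.le zero_le_one, ENNReal.rpow_one]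
            gcongr
            exact hle x
        _ = ∫⁻ x, ∫⁻ s, H x ^ (r - 1) * F s x ∂μ := by
            congr 1; ext x
            rw [lintegral_const_mul]
            exact hF.comp (measurable_id.prodMk measurable_const)
        _ = ∫⁻ s, (∫⁻ x, H x ^ (r - 1) * F s x) ∂μ := by
            apply lintegral_lintegral_swap
            apply Measurable.aemeasurable
            exact ((hH.comp measurable_fst).pow_const _).mul (hF.comp measurable_swap)
        _ ≤ ∫⁻ s, (∫⁻ x, H x ^ r) ^ (1 / (r / (r-1))) * (∫⁻ x, F s x ^ r) ^ (1 / r) ∂μ := by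
            gcongr with s
            have := ENNReal.lintegral_mul_le_Lp_mul_Lq (volume : Measure V2) hconj
              (f := fun x => H x ^ (r - 1)) (g := F s) (hH.pow_const _).aemeasurable
              (hF.comp measurable_prodMk_left).aemeasurable
            refine this.trans (le_of_eq ?_)
            congr 3
            ext x
            rw [← ENNReal.rpow_mul]
            congr 1; field_simp
        _ = _ := by
            rw [lintegral_const_mul]
            apply Measurable.pow_const
            exact Measurable.lintegral_prod_right' (f := fun p : ℝ × V2 => F p.1 p.2 ^ r) (hF.pow_const _)
    rcases eq_or_ne (∫⁻ x, H x ^ r) 0 with h0 | h0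
    · rw [h0]; exact zero_le
    set J := ∫⁻ x, H x ^ r with hJ
    have h2 : J ^ (1 / r) ≤ M := by
      have hJs : J = J ^ (1 / (r / (r-1))) * J ^ (1 / r) := by
        rw [← ENNReal.rpow_add _ _ h0 hfin]
        conv_lhs => rw [← ENNReal.rpow_one J]
        congr 1; field_simp; ring
      nth_rw 1 [hJs] at h1
      refine (ENNReal.mul_le_mul_iff_right ?_ ?_).1 h1
      · simp [h0, hfin]
      · exact ENNReal.rpow_ne_top_of_nonneg (by positivity) hfin
    calc J = (J ^ (1 / r)) ^ r := by rw [← ENNReal.rpow_mul]; field_simp; simp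
      _ ≤ M ^ r := by gcongr
  have hfinal : ∫⁻ x, G x ^ r ≤ M ^ r := by
    set H : ℕ → V2 → ℝ≥0∞ := fun n => (Metric.closedBall (0 : V2) n).indicator (fun x => min (G x) n) with hHdef
    have hHm : ∀ n, Measurable (H n) := fun n =>
      (hGm.min measurable_const).indicator measurableSet_closedBall
    have hmono : Monotone H := by
      intro n m hnm x
      simp only [hHdef]
      by_cases hx : x ∈ Metric.closedBall (0 : V2) n
      · have hx' : x ∈ Metric.closedBall (0 : V2) m := Metric.closedBall_subset_closedBall (by exact_mod_cast hnm) hx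
        rw [indicator_of_mem hx, indicator_of_mem hx']
        gcongr
      · rw [indicator_of_notMem hx]; exact zero_le
    have hsup : ∀ x, ⨆ n, H n x ^ r = G x ^ r := by
      intro x
      apply le_antisymm
      · apply iSup_le
        intro n
        gcongr
        simp only [hHdef]
        by_cases hx : x ∈ Metric.closedBall (0 : V2) n
        · rw [indicator_of_mem hx]; exact min_le_left _ _
        · rw [indicator_of_notMem hx]; exact zero_le
      · obtain ⟨k, hk⟩ := exists_nat_ge ‖x‖
        have hH' : ∀ n, k ≤ n → H n x = min (G x) n := by
          intro n hn
          simp only [hHdef]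
          rw [indicator_of_mem]
          simp
          exact hk.trans (by exact_mod_cast hn)
        refine le_of_tendsto' (f := fun n : ℕ => (min (G x) ((n + k : ℕ) : ℝ≥0∞)) ^ r) (x := Filter.atTop) ?_ ?_
        · apply (ENNReal.continuous_rpow_const.tendsto _).comp
          have : Filter.Tendsto (fun n : ℕ => ((n + k : ℕ) : ℝ≥0∞)) Filter.atTop (nhds ∞) :=
            ENNReal.tendsto_nat_nhds_top.comp (Filter.tendsto_add_atTop_nat k)
          have := (tendsto_const_nhds (x := G x)).min this
          simpa using this
        · intro n
          rw [← hH' (n + k) (by omega)]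
          exact le_iSup (fun n => H n x ^ r) (n + k)
    calc ∫⁻ x, G x ^ r = ∫⁻ x, ⨆ n, H n x ^ r := by simp_rw [hsup]
      _ = ⨆ n, ∫⁻ x, H n x ^ r := by
          apply lintegral_iSup
          · intro n; exact (hHm n).pow_const _
          · intro n m hnm x
            exact ENNReal.rpow_le_rpow (hmono hnm x) hr0.le
      _ ≤ M ^ r := by
          apply iSup_le
          intro n
          apply main _ (hHm n)
          · intro x
            simp only [hHdef]
            by_cases hx : x ∈ Metric.closedBall (0 : V2) n
            · rw [indicator_of_mem hx]; exact min_le_left _ _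
            · rw [indicator_of_notMem hx]; exact zero_le
          · have : ∫⁻ x, H n x ^ r ≤ ∫⁻ x in Metric.closedBall (0 : V2) n, (n : ℝ≥0∞) ^ r := by
              rw [← lintegral_indicator measurableSet_closedBall]
              gcongr with x
              simp only [hHdef]
              by_cases hx : x ∈ Metric.closedBall (0 : V2) n
              · rw [indicator_of_mem hx, indicator_of_mem hx]
                gcongr
                exact min_le_right _ _
              · rw [indicator_of_notMem hx, indicator_of_notMem hx]; simp [hr0]
            refine ne_top_of_le_ne_top ?_ this
            rw [setLIntegral_const]
            apply ENNReal.mul_ne_top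
            · exact ENNReal.rpow_ne_top_of_nonneg hr0.le (by simp)
            · exact measure_closedBall_lt_top.ne
  calc (∫⁻ x, G x ^ r) ^ (1 / r) ≤ (M ^ r) ^ (1 / r) := by gcongr
    _ = M := by rw [← ENNReal.rpow_mul]; field_simp; simp
lemma aux_near (a : ℝ) (ha0 : 0 < a) (ha : a < 1) (t m : ℝ) (hm : 0 < m) :
    ∫⁻ s in Ico (t - m) t, ENNReal.ofReal (|t - s| ^ (-a)) = ENNReal.ofReal (m ^ (1 - a) / (1 - a)) := by
  have h1 : IntervalIntegrable (fun s : ℝ => s ^ (-a)) volume 0 m :=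
    intervalIntegral.intervalIntegrable_rpow' (by linarith)
  have h2 := h1.comp_sub_left t
  simp only [sub_zero] at h2
  have h3 : ∫ s in (t - m)..t, (t - s) ^ (-a) = m ^ (1 - a) / (1 - a) := by
    rw [intervalIntegral.integral_comp_sub_left (fun s => s ^ (-a)) t]
    simp only [sub_self, sub_sub_cancel]
    rw [integral_rpow (Or.inl (by linarith)), Real.zero_rpow (by linarith), show -a + 1 = 1 - a by ring, sub_zero]
  rw [← h3, intervalIntegral.integral_of_le (by linarith), restrict_Ico_eq_restrict_Ioc, ofReal_integral_eq_lintegral_ofReal]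
  · apply setLIntegral_congr_fun measurableSet_Ioc
    intro s hs
    simp only
    rw [abs_of_nonneg (by linarith [hs.2])]
  · exact (intervalIntegrable_iff_integrableOn_Ioc_of_le (by linarith)).1 h2.symm
  · filter_upwards [ae_restrict_mem measurableSet_Ioc] with s hs
    have : 0 ≤ t - s := by linarith [hs.2]
    positivity

lemma aux_set (a : ℝ) (ha0 : 0 < a) (ha : a < 1) (t : ℝ) (E : Set ℝ) (hE : MeasurableSet E) (hEt : E ⊆ Iic t)
    (hfin : volume E ≠ ∞) :
    ∫⁻ s in E, ENNReal.ofReal (|t - s| ^ (-a)) ≤ ENNReal.ofReal (1 / (1 - a) + 1) * volume E ^ (1 - a) := by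
  rcases eq_or_ne (volume E) 0 with h0 | h0
  · rw [Measure.restrict_eq_zero.2 h0]; simp
  set m := (volume E).toReal with hm
  have hmp : 0 < m := ENNReal.toReal_pos h0 hfin
  have hmE : volume E = ENNReal.ofReal m := (ENNReal.ofReal_toReal hfin).symm
  have hsub : E ⊆ Icc (t - m) t ∪ (E ∩ Iio (t - m)) := by
    intro s hs
    by_cases h : s < t - m
    · right; exact ⟨hs, h⟩
    · left; exact ⟨not_lt.1 h, hEt hs⟩
  calc _ ≤ ∫⁻ s in Icc (t - m) t ∪ (E ∩ Iio (t - m)), ENNReal.ofReal (|t - s| ^ (-a)) := lintegral_mono_set hsub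
    _ ≤ (∫⁻ s in Icc (t - m) t, ENNReal.ofReal (|t - s| ^ (-a))) + ∫⁻ s in (E ∩ Iio (t - m)), ENNReal.ofReal (|t - s| ^ (-a)) :=
        lintegral_union_le _ _ _
    _ ≤ ENNReal.ofReal (m ^ (1 - a) / (1 - a)) + ENNReal.ofReal (m ^ (-a)) * ENNReal.ofReal m := by
        gcongr
        · rw [← aux_near a ha0 ha t m hmp, restrict_Ico_eq_restrict_Icc]
        · calc _ ≤ ∫⁻ s in (E ∩ Iio (t - m)), ENNReal.ofReal (m ^ (-a)) := by
                apply setLIntegral_mono' (hE.inter measurableSet_Iio)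
                intro s hs
                apply ENNReal.ofReal_le_ofReal
                have : s < t - m := hs.2
                rw [abs_of_nonneg (by linarith)]
                apply Real.rpow_le_rpow_of_nonpos hmp (by linarith) (by linarith)
            _ ≤ _ := by
                rw [setLIntegral_const, ← hmE]
                gcongr
                exact inter_subset_left
    _ = _ := by
        have : 0 < 1 - a := by linarith
        rw [hmE, ENNReal.ofReal_rpow_of_pos hmp, ← ENNReal.ofReal_mul (by positivity), ← ENNReal.ofReal_mul (by positivity), ← ENNReal.ofReal_add (by positivity) (by positivity)]
        congr 1
        have : m ^ (-a) * m = m ^ (1 - a) := by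
          rw [show 1 - a = -a + 1 by ring, Real.rpow_add hmp, Real.rpow_one]
        rw [this]; ring

lemma aux_sq (y : ℝ≥0∞) : y ^ 2 ≤ 2 * ∫⁻ l in Ioi (0:ℝ), (if ENNReal.ofReal l < y then ENNReal.ofReal l else 0) := by
  have hreal : ∀ b : ℝ, 0 ≤ b → ∫⁻ l in Ioo (0:ℝ) b, ENNReal.ofReal l = ENNReal.ofReal (b ^ 2 / 2) := by
    intro b hb
    rw [restrict_Ioo_eq_restrict_Ioc, ← ofReal_integral_eq_lintegral_ofReal]
    · rw [← intervalIntegral.integral_of_le hb]; simp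
    · exact (intervalIntegrable_iff_integrableOn_Ioc_of_le hb).1 intervalIntegral.intervalIntegrable_id
    · filter_upwards [ae_restrict_mem measurableSet_Ioc] with s hs using hs.1.le
  have hb : ∀ b : ℝ, 0 ≤ b → ENNReal.ofReal b ≤ y → ENNReal.ofReal b ^ 2 ≤ 2 * ∫⁻ l in Ioi (0:ℝ), (if ENNReal.ofReal l < y then ENNReal.ofReal l else 0) := by
    intro b hb hby
    calc ENNReal.ofReal b ^ 2 = 2 * ∫⁻ l in Ioo (0:ℝ) b, ENNReal.ofReal l := by
          rw [hreal b hb, ← ENNReal.ofReal_pow hb, ← ENNReal.ofReal_ofNat, ← ENNReal.ofReal_mul (by norm_num)]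
          congr 1; ring
      _ = 2 * ∫⁻ l in Ioo (0:ℝ) b, (if ENNReal.ofReal l < y then ENNReal.ofReal l else 0) := by
          congr 1
          apply setLIntegral_congr_fun measurableSet_Ioo
          intro l hl
          simp only
          rw [if_pos]
          refine lt_of_lt_of_le ?_ hby
          exact (ENNReal.ofReal_lt_ofReal_iff (hl.1.trans hl.2)).2 hl.2
      _ ≤ _ := by
          gcongr
          exact Ioo_subset_Ioi_self
  rcases eq_or_ne y ∞ with h | h
  · have : ∀ n : ℕ, (n : ℝ≥0∞) ^ 2 ≤ 2 * ∫⁻ l in Ioi (0:ℝ), (if ENNReal.ofReal l < y then ENNReal.ofReal l else 0) := by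
      intro n
      have := hb n (by positivity) (by simp [h])
      simpa using this
    have h3 : Filter.Tendsto (fun n : ℕ => (n : ℝ≥0∞) ^ 2) Filter.atTop (nhds (∞ ^ 2)) :=
      ENNReal.Tendsto.pow ENNReal.tendsto_nat_nhds_top
    rw [h] at this ⊢
    exact le_of_tendsto' h3 this
  · have := hb y.toReal ENNReal.toReal_nonneg (by rw [ENNReal.ofReal_toReal h])
    rwa [ENNReal.ofReal_toReal h] at this

lemma aux_kernel (r : ℝ) (hr : 2 < r) (t : ℝ) (I : Set ℝ) (hI : MeasurableSet I) (hIt : I ⊆ Iic t) (hfin : volume I ≠ ∞)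
    (g : ℝ → ℝ≥0∞) (hg : Measurable g) :
    ∫⁻ s in I, ENNReal.ofReal (|t - s| ^ (-(1 - 2 / r))) * g s ^ 2 ≤
      ENNReal.ofReal (1 + 2 / r) * lorentzNorm (volume.restrict I) (ENNReal.ofReal r) 2 g ^ 2 := by
  have hr0 : 0 < r := by linarith
  have ha0 : 0 < 1 - 2 / r := by
    rw [sub_pos, div_lt_one hr0]; exact hr
  have ha1 : 1 - 2 / r < 1 := by
    have : 0 < 2 / r := by positivity
    linarith
  set a := 1 - 2 / r with ha
  set k : ℝ → ℝ≥0∞ := fun s => ENNReal.ofReal (|t - s| ^ (-a)) with hk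
  have hkm : Measurable k := by fun_prop
  have hL : lorentzNorm (volume.restrict I) (ENNReal.ofReal r) 2 g ^ 2 =
      ENNReal.ofReal r * ∫⁻ l in Ioi (0:ℝ), ENNReal.ofReal l * volume.restrict I {s | ENNReal.ofReal l < g s} ^ (1 - a) := by
    simp only [lorentzNorm, ENNReal.ofNat_ne_top, if_false]
    rw [← ENNReal.rpow_natCast, ← ENNReal.rpow_mul]
    have : (2:ℝ≥0∞)⁻¹.toReal * (2:ℕ) = 1 := by simp
    rw [this, ENNReal.rpow_one]
    congr 1
    apply setLIntegral_congr_fun measurableSet_Ioi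
    intro l hl
    have hl : 0 < l := hl
    simp only [ENNReal.toReal_ofNat, ENNReal.toReal_inv, ENNReal.toReal_ofReal hr0.le]
    rw [ENNReal.mul_rpow_of_nonneg _ _ (by norm_num), ← ENNReal.rpow_mul, mul_comm, mul_div_assoc, mul_comm]
    congr 1
    · rw [ENNReal.rpow_ofNat, pow_two, mul_div_assoc, ENNReal.div_self, mul_one]
      · simp [hl]
      · simp
    · congr 1; rw [ha]; field_simp; ring
  rw [hL]
  calc ∫⁻ s in I, k s * g s ^ 2 ≤ ∫⁻ s in I, k s * (2 * ∫⁻ l in Ioi (0:ℝ), (if ENNReal.ofReal l < g s then ENNReal.ofReal l else 0)) := by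
        gcongr with s; exact aux_sq _
    _ = 2 * ∫⁻ s in I, ∫⁻ l in Ioi (0:ℝ), (if ENNReal.ofReal l < g s then k s * ENNReal.ofReal l else 0) := by
        rw [← lintegral_const_mul' _ _ (by norm_num)]
        congr 1; ext s
        rw [mul_left_comm]
        congr 1
        rw [← lintegral_const_mul' _ _ (by simp [hk])]
        congr 1; ext l
        split_ifs <;> simp
    _ = 2 * ∫⁻ l in Ioi (0:ℝ), ∫⁻ s in I, (if ENNReal.ofReal l < g s then k s * ENNReal.ofReal l else 0) := by
        congr 1
        apply lintegral_lintegral_swap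
        apply Measurable.aemeasurable
        apply Measurable.ite
        · apply measurableSet_lt <;> fun_prop
        · fun_prop
        · fun_prop
    _ ≤ 2 * ∫⁻ l in Ioi (0:ℝ), ENNReal.ofReal (1 / (1 - a) + 1) * (ENNReal.ofReal l * volume.restrict I {s | ENNReal.ofReal l < g s} ^ (1 - a)) := by
        gcongr with l
        have hms : MeasurableSet {s | ENNReal.ofReal l < g s} := measurableSet_lt measurable_const hg
        calc _ = ∫⁻ s in I, {s | ENNReal.ofReal l < g s}.indicator (fun s => ENNReal.ofReal l * k s) s := by
              congr 1; ext s; simp only [indicator, mem_ofPred_eq, mul_comm]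
          _ = ENNReal.ofReal l * ∫⁻ s in {s | ENNReal.ofReal l < g s} ∩ I, k s := by
              rw [lintegral_indicator hms, Measure.restrict_restrict hms, lintegral_const_mul _ hkm]
          _ ≤ ENNReal.ofReal l * (ENNReal.ofReal (1 / (1 - a) + 1) * volume ({s | ENNReal.ofReal l < g s} ∩ I) ^ (1 - a)) := by
              gcongr
              apply aux_set a ha0 ha1 t _ (hms.inter hI) (inter_subset_right.trans hIt)
              exact ne_top_of_le_ne_top hfin (measure_mono inter_subset_right)
          _ = _ := by
              rw [Measure.restrict_apply hms]; ring
    _ = _ := by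
        rw [lintegral_const_mul' _ _ (by simp), ← mul_assoc, ← mul_assoc]
        congr 1
        rw [← ENNReal.ofReal_ofNat, ← ENNReal.ofReal_mul (by norm_num), ← ENNReal.ofReal_mul (by positivity)]
        congr 1
        rw [ha]; field_simp; ring

lemma aux_joint (t : ℝ) (w : ℝ → V2 → ℂ) (hw : Measurable (Function.uncurry w)) :
    Measurable (fun p : ℝ × V2 => schrod 2 (t - p.1) (w p.1) p.2) := by
  have e : (fun p : ℝ × V2 => schrod 2 (t - p.1) (w p.1) p.2) = fun p : ℝ × V2 =>
      if t - p.1 = 0 then w p.1 p.2 else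
    (4 * (Real.pi : ℂ) * Complex.I * ((t - p.1 : ℝ) : ℂ)) ^ (-((2:ℕ) : ℂ) / 2) *
      ∫ y, Complex.exp (Complex.I * ((‖p.2 - y‖ ^ 2 : ℝ) : ℂ) / (4 * ((t - p.1 : ℝ) : ℂ))) * w p.1 y := by
    ext p
    simp only [schrod]
    split_ifs <;> rfl
  rw [e]
  apply Measurable.ite
  · apply measurableSet_eq_fun <;> fun_prop
  · exact hw
  · apply Measurable.mul
    · apply Measurable.pow_const
      fun_prop
    · apply StronglyMeasurable.measurable
      apply StronglyMeasurable.integral_prod_right'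
        (f := fun q : (ℝ × V2) × V2 => Complex.exp (Complex.I * ((‖q.1.2 - q.2‖ ^ 2 : ℝ) : ℂ) / (4 * ((t - q.1.1 : ℝ) : ℂ))) * w q.1.1 q.2)
      apply Measurable.stronglyMeasurable
      apply Measurable.mul
      · fun_prop
      · exact hw.comp ((measurable_fst.comp measurable_fst).prodMk measurable_snd)

lemma aux_schrod_meas (τ : ℝ) (f : V2 → ℂ) (hf : Measurable f) : Measurable (schrod 2 τ f) := by
  have := (aux_joint τ (fun _ => f) (hf.comp measurable_snd)).comp (measurable_const (a := (0:ℝ)) |>.prodMk measurable_id)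
  simpa [Function.comp_def] using this

lemma aux_disp (r : ℝ) (hr : 2 < r) (τ : ℝ) (hτ : τ ≠ 0) (f : V2 → ℂ) (hf : Measurable f) :
    eLpNorm (schrod 2 τ f) (ENNReal.ofReal r) volume ≤
      ENNReal.ofReal ((r * (4 / (r - 2)) * 2 ^ (r - 2)) ^ (1 / r) * |τ| ^ (-(1 - 2 / r))) *
        eLpNorm f (ENNReal.ofReal (r / (r - 1))) volume := by
  have hr0 : 0 < r := by linarith
  have hr1 : 0 < r - 1 := by linarith
  have hr2 : 0 < r - 2 := by linarith
  have hτ' : 0 < |τ| := abs_pos.2 hτ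
  by_cases hfi : Integrable f
  · have := aux_interp r hr (1 / |τ|) (by positivity) (schrod 2 τ) ?_ ?_ ?_ ?_ f hf hfi
    · rw [eLpNorm_eq_lintegral_rpow_enorm_toReal (by simp [hr0]) (by simp),
        eLpNorm_eq_lintegral_rpow_enorm_toReal (by simp; positivity) (by simp),
        ENNReal.toReal_ofReal hr0.le, ENNReal.toReal_ofReal (by positivity)]
      refine (ENNReal.rpow_le_rpow this (by positivity : 0 ≤ 1 / r)).trans (le_of_eq ?_)
      rw [ENNReal.mul_rpow_of_nonneg _ _ (by positivity), ← ENNReal.rpow_mul, ENNReal.ofReal_rpow_of_pos (by positivity)]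
      congr 2
      · rw [Real.mul_rpow (by positivity) (by positivity), ← Real.rpow_mul (by positivity), one_div |τ|, Real.inv_rpow hτ'.le, ← Real.rpow_neg hτ'.le]
        congr 2; field_simp
      · field_simp
    · intro f g hf hg x
      simp only [schrod, hτ, if_false, Pi.add_apply, mul_add]
      have hi : ∀ h : V2 → ℂ, Integrable h → Integrable fun y => Complex.exp (Complex.I * ((‖x - y‖ ^ 2 : ℝ) : ℂ) / (4 * (τ : ℂ))) * h y := by
        intro h hh
        apply hh.bdd_mul (c := 1)
        · apply Continuous.aestronglyMeasurable
          fun_prop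
        · refine ae_of_all _ fun y => le_of_eq ?_
          have : Complex.I * ((‖x - y‖ ^ 2 : ℝ) : ℂ) / (4 * (τ : ℂ)) = ((‖x - y‖ ^ 2 / (4 * τ) : ℝ) : ℂ) * Complex.I := by
            push_cast; ring
          rw [this, Complex.norm_exp_ofReal_mul_I]
      rw [integral_add (hi f hf) (hi g hg), mul_add]
    · intro f x
      refine (aux_schrod_linf τ hτ f x).trans ?_
      gcongr
      have := Real.pi_gt_three
      nlinarith
    · intro f h1 h2
      exact (aux_schrod_l2 τ hτ f h1 h2).le
    · intro f hf; exact aux_schrod_meas τ f hf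
  · have : schrod 2 τ f = 0 := by
      ext x
      simp only [schrod, hτ, if_false, Pi.zero_apply]
      rw [integral_undef, mul_zero]
      intro hc
      apply hfi
      have h2 : Integrable fun y => Complex.exp (-(Complex.I * ((‖x - y‖ ^ 2 : ℝ) : ℂ) / (4 * (τ : ℂ)))) * (Complex.exp (Complex.I * ((‖x - y‖ ^ 2 : ℝ) : ℂ) / (4 * (τ : ℂ))) * f y) := by
        apply hc.bdd_mul (c := 1)
        · apply Continuous.aestronglyMeasurable
          fun_prop
        · refine ae_of_all _ fun y => le_of_eq ?_
          have : -(Complex.I * ((‖x - y‖ ^ 2 : ℝ) : ℂ) / (4 * (τ : ℂ))) = ((-(‖x - y‖ ^ 2 / (4 * τ)) : ℝ) : ℂ) * Complex.I := by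
            push_cast; ring
          rw [this, Complex.norm_exp_ofReal_mul_I]
      refine h2.congr (ae_of_all _ fun y => ?_)
      simp only
      rw [← mul_assoc, ← Complex.exp_add]; simp
    rw [this]; simp

lemma aux_hold (r : ℝ) (hr : 2 < r) (g : V2 → ℂ) (hg : Measurable g) :
    eLpNorm (nonlin 2 g) (ENNReal.ofReal (r / (r - 1))) volume ≤
      eLpNorm g (ENNReal.ofReal r) volume * eLpNorm g (ENNReal.ofReal (2 * r / (r - 2))) volume ^ 2 := by
  have hr0 : 0 < r := by linarith
  have hr1 : 0 < r - 1 := by linarith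
  have hr2 : 0 < r - 2 := by linarith
  have t1 : ENNReal.HolderTriple (ENNReal.ofReal (2 * r / (r - 2))) (ENNReal.ofReal (2 * r / (r - 2))) (ENNReal.ofReal (r / (r - 2))) := by
    constructor
    rw [← ENNReal.ofReal_inv_of_pos (by positivity), ← ENNReal.ofReal_inv_of_pos (by positivity), ← ENNReal.ofReal_add (by positivity) (by positivity)]
    congr 1; field_simp; ring
  have t2 : ENNReal.HolderTriple (ENNReal.ofReal (r / (r - 2))) (ENNReal.ofReal r) (ENNReal.ofReal (r / (r - 1))) := by
    constructor
    rw [← ENNReal.ofReal_inv_of_pos (by positivity), ← ENNReal.ofReal_inv_of_pos (by positivity), ← ENNReal.ofReal_inv_of_pos (by positivity), ← ENNReal.ofReal_add (by positivity) (by positivity)]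
    congr 1; field_simp; ring
  have e : eLpNorm (nonlin 2 g) (ENNReal.ofReal (r / (r - 1))) volume = eLpNorm ((g • g) • g) (ENNReal.ofReal (r / (r - 1))) volume := by
    apply eLpNorm_congr_norm_ae
    refine ae_of_all _ fun x => ?_
    simp [nonlin, pow_two]
  rw [e]
  calc _ ≤ eLpNorm (g • g) (ENNReal.ofReal (r / (r - 2))) volume * eLpNorm g (ENNReal.ofReal r) volume :=
        eLpNorm_smul_le_mul_eLpNorm hg.aestronglyMeasurable (hg.smul hg).aestronglyMeasurable
    _ ≤ (eLpNorm g (ENNReal.ofReal (2 * r / (r - 2))) volume * eLpNorm g (ENNReal.ofReal (2 * r / (r - 2))) volume) * eLpNorm g (ENNReal.ofReal r) volume := by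
        gcongr
        exact eLpNorm_smul_le_mul_eLpNorm hg.aestronglyMeasurable hg.aestronglyMeasurable
    _ = _ := by ring

set_option maxHeartbeats 2000000 in
/-- **Two-dimensional late-time Duhamel estimate.**  Fix `2 < r < ∞` and set `q = 2r/(r-2)`.
For any `t > 0`, any measurable interval `I ⊆ [t/2, t]`, and any measurable `u` on `I × ℝ²`,
`‖∫_I e^{i(t-s)Δ}(|u|²u)(s) ds‖_{L^r_x} ≤ C t^{-2(1/2-1/r)}
  (sup_{s∈I} s^{2(1/2-1/r)} ‖u(s)‖_{L^r_x}) ‖u‖²_{L^{r,2}_s L^q_x(I×ℝ²)}`, with `C = C(r)`. -/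
theorem late_time_duhamel_2d (r : ℝ) (hr : 2 < r) :
    ∃ C : ℝ, 0 < C ∧
      ∀ t : ℝ, 0 < t →
        ∀ I : Set ℝ, MeasurableSet I → I.OrdConnected → I ⊆ Set.Icc (t / 2) t →
          ∀ u : ℝ → EuclideanSpace ℝ (Fin 2) → ℂ, Measurable (Function.uncurry u) →
            eLpNorm (fun x => ∫ s in I, schrod 2 (t - s) (nonlin 2 (u s)) x)
                (ENNReal.ofReal r) volume ≤
              ENNReal.ofReal (C * t ^ (-(2 * (1 / 2 - 1 / r)))) *
                (⨆ s ∈ I, ENNReal.ofReal (s ^ (2 * (1 / 2 - 1 / r))) *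
                  eLpNorm (u s) (ENNReal.ofReal r) volume) *
                lorentzMixedNorm volume I (ENNReal.ofReal r) 2
                    (ENNReal.ofReal (2 * r / (r - 2))) u ^ 2 := by
  have hr0 : 0 < r := by linarith
  have hr2 : 0 < r - 2 := by linarith
  have hq : 0 < 2 * r / (r - 2) := by positivity
  have ea : 2 * (1 / 2 - 1 / r) = 1 - 2 / r := by ring
  rw [ea]
  set a := 1 - 2 / r with ha
  set K := (r * (4 / (r - 2)) * 2 ^ (r - 2)) ^ (1 / r) with hK
  have hKp : 0 < K := by positivity
  refine ⟨K * 2 ^ a * (1 + 2 / r), by positivity, ?_⟩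
  intro t ht I hI _ hIt u hu
  have ha0 : 0 < a := by
    rw [ha, sub_pos, div_lt_one hr0]; exact hr
  set S := ⨆ s ∈ I, ENNReal.ofReal (s ^ a) * eLpNorm (u s) (ENNReal.ofReal r) volume with hS
  have hus : ∀ s, Measurable (u s) := fun s => hu.comp measurable_prodMk_left
  have hnl : Measurable (Function.uncurry fun s => nonlin 2 (u s)) := by
    have : (Function.uncurry fun s => nonlin 2 (u s)) = fun p : ℝ × V2 => ((‖Function.uncurry u p‖ ^ (2:ℝ) : ℝ) : ℂ) * Function.uncurry u p := by
      ext p; rfl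
    rw [this]; fun_prop
  have hj := aux_joint t (fun s => nonlin 2 (u s)) hnl
  have hsup : ∀ s ∈ I, eLpNorm (u s) (ENNReal.ofReal r) volume ≤ ENNReal.ofReal (2 ^ a * t ^ (-a)) * S := by
    intro s hs
    have hst := hIt hs
    have hs0 : 0 < s := lt_of_lt_of_le (by positivity) hst.1
    calc eLpNorm (u s) (ENNReal.ofReal r) volume = 1 * eLpNorm (u s) (ENNReal.ofReal r) volume := by rw [one_mul]
      _ ≤ (ENNReal.ofReal (2 ^ a * t ^ (-a)) * ENNReal.ofReal (s ^ a)) * eLpNorm (u s) (ENNReal.ofReal r) volume := by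
          gcongr
          rw [← ENNReal.ofReal_mul (by positivity), ← ENNReal.ofReal_one]
          apply ENNReal.ofReal_le_ofReal
          have h1 : (t / 2) ^ a ≤ s ^ a := Real.rpow_le_rpow (by positivity) hst.1 ha0.le
          calc (1:ℝ) = 2 ^ a * t ^ (-a) * (t / 2) ^ a := by
                rw [Real.div_rpow ht.le (by norm_num), Real.rpow_neg ht.le]
                field_simp
            _ ≤ _ := by gcongr
      _ = ENNReal.ofReal (2 ^ a * t ^ (-a)) * (ENNReal.ofReal (s ^ a) * eLpNorm (u s) (ENNReal.ofReal r) volume) := by rw [mul_assoc]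
      _ ≤ _ := by
          gcongr
          exact le_iSup₂ (f := fun s (_ : s ∈ I) => ENNReal.ofReal (s ^ a) * eLpNorm (u s) (ENNReal.ofReal r) volume) s hs
  set g : ℝ → ℝ≥0∞ := fun s => eLpNorm (u s) (ENNReal.ofReal (2 * r / (r - 2))) volume with hg
  have hgm : Measurable g := by
    have : g = fun s => (∫⁻ x, ‖u s x‖ₑ ^ (2 * r / (r - 2))) ^ (1 / (2 * r / (r - 2))) := by
      ext s
      rw [hg]
      simp only
      rw [eLpNorm_eq_lintegral_rpow_enorm_toReal (by simpa using hq) (by simp), ENNReal.toReal_ofReal hq.le]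
    rw [this]
    apply Measurable.pow_const
    exact Measurable.lintegral_prod_right' (f := fun p : ℝ × V2 => ‖Function.uncurry u p‖ₑ ^ (2 * r / (r - 2))) (hu.enorm.pow_const _)
  have hIfin : volume I ≠ ∞ := ne_top_of_le_ne_top (by simp) (measure_mono hIt)
  have hker := aux_kernel r hr t I hI (fun s hs => (hIt hs).2) hIfin g hgm
  have hLm : lorentzMixedNorm volume I (ENNReal.ofReal r) 2 (ENNReal.ofReal (2 * r / (r - 2))) u =
    lorentzNorm (volume.restrict I) (ENNReal.ofReal r) 2 g := rfl
  rw [hLm]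
  rw [eLpNorm_eq_lintegral_rpow_enorm_toReal (by simpa using hr0) (by simp), ENNReal.toReal_ofReal hr0.le]
  calc _ ≤ (∫⁻ x, (∫⁻ s in I, ‖schrod 2 (t - s) (nonlin 2 (u s)) x‖ₑ) ^ r) ^ (1 / r) := by
        gcongr
        exact enorm_integral_le_lintegral_enorm _
    _ ≤ ∫⁻ s in I, (∫⁻ x, ‖schrod 2 (t - s) (nonlin 2 (u s)) x‖ₑ ^ r) ^ (1 / r) :=
        aux_mink r hr (volume.restrict I) (fun s x => ‖schrod 2 (t - s) (nonlin 2 (u s)) x‖ₑ) hj.enorm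
    _ ≤ ∫⁻ s in I, (ENNReal.ofReal K * (ENNReal.ofReal (2 ^ a * t ^ (-a)) * S)) * (ENNReal.ofReal (|t - s| ^ (-a)) * g s ^ 2) := by
        apply lintegral_mono_ae
        have hne : ∀ᵐ s ∂(volume.restrict I), s ≠ t := by
          apply ae_restrict_of_ae
          exact Measure.ae_ne volume t
        filter_upwards [ae_restrict_mem hI, hne] with s hs hst
        have h1 := aux_disp r hr (t - s) (sub_ne_zero.2 hst.symm) (nonlin 2 (u s)) (hnl.comp measurable_prodMk_left)
        rw [eLpNorm_eq_lintegral_rpow_enorm_toReal (by simpa using hr0) (by simp), ENNReal.toReal_ofReal hr0.le] at h1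
        refine h1.trans ?_
        calc _ ≤ ENNReal.ofReal (K * |t - s| ^ (-a)) * ((ENNReal.ofReal (2 ^ a * t ^ (-a)) * S) * g s ^ 2) := by
              gcongr
              refine (aux_hold r hr (u s) (hus s)).trans ?_
              gcongr
              exact hsup s hs
          _ = _ := by
              rw [ENNReal.ofReal_mul hKp.le]; ring
    _ = (ENNReal.ofReal K * (ENNReal.ofReal (2 ^ a * t ^ (-a)) * S)) * ∫⁻ s in I, ENNReal.ofReal (|t - s| ^ (-a)) * g s ^ 2 := by
        rw [lintegral_const_mul]
        fun_prop
    _ ≤ (ENNReal.ofReal K * (ENNReal.ofReal (2 ^ a * t ^ (-a)) * S)) * (ENNReal.ofReal (1 + 2 / r) * lorentzNorm (volume.restrict I) (ENNReal.ofReal r) 2 g ^ 2) := by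
        gcongr
    _ = _ := by
        have : ENNReal.ofReal (K * 2 ^ a * (1 + 2 / r) * t ^ (-a)) = ENNReal.ofReal K * ENNReal.ofReal (2 ^ a * t ^ (-a)) * ENNReal.ofReal (1 + 2 / r) := by
          rw [← ENNReal.ofReal_mul (by positivity), ← ENNReal.ofReal_mul (by positivity)]
          congr 1; ring
        rw [this]; ring
end
end

section
/- One-dimensional late-time Duhamel estimate: fix 2 < r ≤ ∞. For any t > 0, any measurable interval I ⊆ [t/2, t], and any measurable u : I × ℝ → ℂ, one has ‖ ∫_I e^{i(t−s)Δ} (|u|⁴u)(s) ds ‖_{L^r_x(ℝ)} ≤ C t^{−(1/2−1/r)} ( sup_{s ∈ I} s^{1/2−1/r} ‖u(s)‖_{L^r_x(ℝ)} ) ‖u‖⁴_{L^{8r/(r+2),4}_s L^{4r/(r−2)}_x(I×ℝ)}, with C depending only on r. -/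
open MeasureTheory Set
open scoped ENNReal Real

noncomputable section

open scoped FourierTransform in
lemma fourier_cont (h : ℝ → ℂ) (h1 : Integrable h) : Continuous (𝓕 h) := by
  exact VectorFourier.fourierIntegral_continuous (L := innerₗ ℝ) Real.continuous_fourierChar (by exact continuous_inner) h1

open scoped FourierTransform in
lemma plancherel_L1L2 (h : ℝ → ℂ) (h1 : Integrable h) (h2 : MemLp h 2 volume) :
    eLpNorm (𝓕 h) 2 volume = eLpNorm h 2 volume := by
  set f : Lp (α := ℝ) ℂ 2 volume := h2.toLp h with hf
  have hcont := fourier_cont h h1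
  have key : ∀ᵐ x : ℝ ∂volume, ((𝓕 f : Lp (α := ℝ) ℂ 2 volume) : ℝ → ℂ) x = 𝓕 h x := by
    refine ae_eq_of_integral_contDiff_smul_eq ?_ hcont.locallyIntegrable ?_
    · exact (Lp.memLp (𝓕 f)).locallyIntegrable (by norm_num)
    · intro g hg hgc
      have hgc' : HasCompactSupport (fun x => (g x : ℂ)) := hgc.comp_left (g := fun x : ℝ => (x : ℂ)) (by simp)
      have hg' : ContDiff ℝ (⊤ : ℕ∞) (fun x => (g x : ℂ)) := Complex.ofRealCLM.contDiff.comp hg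
      let φ : SchwartzMap ℝ ℂ := hgc'.toSchwartzMap hg'
      have hφ : ∀ x, φ x = (g x : ℂ) := fun x => rfl
      have e1 := congrArg (fun T => T φ) (MeasureTheory.Lp.fourier_toTemperedDistribution_eq f)
      simp only [TemperedDistribution.fourier_apply, Lp.toTemperedDistribution_apply] at e1
      have e2 : ∫ x, (𝓕 φ) x • f x = ∫ x, (𝓕 φ) x • h x := by
        apply integral_congr_ae
        filter_upwards [h2.coeFn_toLp] with x hx
        rw [hf, hx]
      have e3 : ∫ ξ, 𝓕 (φ : ℝ → ℂ) ξ • h ξ = ∫ x, φ x • 𝓕 h x := by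
        simpa using! (VectorFourier.integral_fourierIntegral_smul_eq_flip (L := innerₗ ℝ)
          Real.continuous_fourierChar (by exact continuous_inner) φ.integrable h1)
      rw [SchwartzMap.fourier_coe] at e2 e1
      have e4 := e1.symm.trans (e2.trans e3)
      simpa [hφ] using e4
  rw [← eLpNorm_congr_ae key, ← eLpNorm_congr_ae h2.coeFn_toLp]
  have := MeasureTheory.Lp.norm_fourier_eq f
  rw [Lp.norm_def, Lp.norm_def] at this
  exact (ENNReal.toReal_eq_toReal_iff' (Lp.eLpNorm_ne_top _) (Lp.eLpNorm_ne_top _)).1 this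

lemma weight_bound (a : ℝ) (ha0 : 0 < a) (ha1 : a < 1) (t : ℝ) (E : Set ℝ) :
    ∫⁻ s in E, ENNReal.ofReal (|t - s| ^ (-a)) ≤
      ENNReal.ofReal (2 / (1 - a) + 1) * volume E ^ (1 - a) := by
  have hc : 0 < 2 / (1 - a) + 1 := by have : 0 < 1 - a := by linarith
                                      positivity
  by_cases htop : volume E = ∞
  · rw [htop, ENNReal.top_rpow_of_pos (by linarith), ENNReal.mul_top (by simpa using hc)]
    exact le_top
  by_cases h0 : volume E = 0
  · rw [Measure.restrict_eq_zero.2 h0]; simp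
  set m := (volume E).toReal with hm
  have hm0 : 0 < m := ENNReal.toReal_pos h0 htop
  have hEm : volume E = ENNReal.ofReal m := (ENNReal.ofReal_toReal htop).symm
  have hfun : ∀ s, ENNReal.ofReal (|t - s| ^ (-a)) ≤
      (Ioo (t - m) (t + m)).indicator (fun s => ENNReal.ofReal (|t - s| ^ (-a))) s
        + ENNReal.ofReal (m ^ (-a)) := by
    intro s
    by_cases hs : s ∈ Ioo (t - m) (t + m)
    · rw [indicator_of_mem hs]; exact le_self_add
    · rw [indicator_of_notMem hs, zero_add]
      apply ENNReal.ofReal_le_ofReal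
      apply Real.rpow_le_rpow_of_nonpos hm0 _ (by linarith)
      by_contra hlt
      push Not at hlt
      rw [abs_lt] at hlt
      exact hs ⟨by linarith, by linarith⟩
  have hball : ∫⁻ s in Ioo (t - m) (t + m), ENNReal.ofReal (|t - s| ^ (-a)) ≤ ENNReal.ofReal (2 / (1 - a) * m ^ (1 - a)) := by
    have hmeas : Measurable fun s : ℝ => ENNReal.ofReal (|s| ^ (-a)) := by fun_prop
    have e0 : ∫⁻ s in Ioo (t - m) (t + m), ENNReal.ofReal (|t - s| ^ (-a)) = ∫⁻ s in Ioo (-m) m, ENNReal.ofReal (|s| ^ (-a)) := by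
      rw [← lintegral_indicator measurableSet_Ioo, ← lintegral_indicator measurableSet_Ioo,
        ← lintegral_sub_left_eq_self _ t]
      congr 1; ext s
      simp only [indicator, mem_Ioo]
      congr 1
      · apply propext; constructor <;> rintro ⟨h, h'⟩ <;> constructor <;> linarith
      · rw [sub_sub_cancel]
    have pos : ∫⁻ s in Ioc 0 m, ENNReal.ofReal (|s| ^ (-a)) = ENNReal.ofReal (1 / (1 - a) * m ^ (1 - a)) := by
      have hii : IntervalIntegrable (fun s : ℝ => s ^ (-a)) volume 0 m := intervalIntegral.intervalIntegrable_rpow' (by linarith)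
      have : ∫⁻ s in Ioc 0 m, ENNReal.ofReal (|s| ^ (-a)) = ∫⁻ s in Ioc 0 m, ENNReal.ofReal (s ^ (-a)) := by
        apply setLIntegral_congr_fun measurableSet_Ioc
        intro s hs
        simp only [abs_of_pos hs.1]
      rw [this, ← ofReal_integral_eq_lintegral_ofReal, ← intervalIntegral.integral_of_le hm0.le,
        integral_rpow (Or.inl (by linarith)), Real.zero_rpow (by linarith), show -a + 1 = 1 - a by ring]
      · congr 1; ring
      · exact (intervalIntegrable_iff_integrableOn_Ioc_of_le hm0.le).1 hii
      · filter_upwards [ae_restrict_mem measurableSet_Ioc] with s hs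
        exact Real.rpow_nonneg hs.1.le _
    have neg : ∫⁻ s in Ico (-m) 0, ENNReal.ofReal (|s| ^ (-a)) = ∫⁻ s in Ioc 0 m, ENNReal.ofReal (|s| ^ (-a)) := by
      rw [← lintegral_indicator measurableSet_Ico, ← lintegral_indicator measurableSet_Ioc,
        ← lintegral_neg_eq_self]
      congr 1; ext s
      simp only [indicator, mem_Ico, mem_Ioc, abs_neg]
      congr 1
      · apply propext; constructor <;> rintro ⟨h, h'⟩ <;> constructor <;> linarith
    rw [e0]
    calc ∫⁻ s in Ioo (-m) m, ENNReal.ofReal (|s| ^ (-a))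
        ≤ ∫⁻ s in Ico (-m) 0 ∪ ({0} ∪ Ioc 0 m), ENNReal.ofReal (|s| ^ (-a)) := by
          apply lintegral_mono_set
          intro s hs
          rcases lt_trichotomy s 0 with h | h | h
          · left; exact ⟨hs.1.le, h⟩
          · right; left; exact h
          · right; right; exact ⟨h, hs.2.le⟩
      _ ≤ (∫⁻ s in Ico (-m) 0, ENNReal.ofReal (|s| ^ (-a))) + ((∫⁻ s in {0}, ENNReal.ofReal (|s| ^ (-a))) + ∫⁻ s in Ioc 0 m, ENNReal.ofReal (|s| ^ (-a))) := by
          refine (lintegral_union_le _ _ _).trans ?_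
          gcongr
          exact lintegral_union_le _ _ _
      _ = _ := by
          rw [neg, pos, Measure.restrict_singleton]
          simp only [Real.volume_singleton, zero_smul, lintegral_zero_measure, zero_add]
          have : 0 < 1 - a := by linarith
          rw [← ENNReal.ofReal_add (by positivity) (by positivity)]
          congr 1; ring
  calc ∫⁻ s in E, ENNReal.ofReal (|t - s| ^ (-a))
      ≤ ∫⁻ s in E, ((Ioo (t - m) (t + m)).indicator (fun s => ENNReal.ofReal (|t - s| ^ (-a))) s
        + ENNReal.ofReal (m ^ (-a))) := lintegral_mono hfun
    _ = (∫⁻ s in E, (Ioo (t - m) (t + m)).indicator (fun s => ENNReal.ofReal (|t - s| ^ (-a))) s)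
        + ENNReal.ofReal (m ^ (-a)) * volume E := by
        rw [lintegral_add_right _ measurable_const, setLIntegral_const]
    _ ≤ ENNReal.ofReal (2 / (1 - a) * m ^ (1 - a)) + ENNReal.ofReal (m ^ (-a)) * volume E := by
        gcongr
        refine (lintegral_mono' Measure.restrict_le_self le_rfl).trans ?_
        rw [lintegral_indicator measurableSet_Ioo]
        exact hball
    _ = _ := by
        have : 0 < 1 - a := by linarith
        rw [hEm, ← ENNReal.ofReal_mul (by positivity), ENNReal.ofReal_rpow_of_pos hm0,
          ← ENNReal.ofReal_add (by positivity) (by positivity), ← ENNReal.ofReal_mul hc.le]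
        congr 1
        rw [show m ^ (1 - a) = m ^ (-a) * m by
          rw [show 1 - a = -a + 1 by ring, Real.rpow_add_one hm0.ne']]
        ring


lemma mink (ρ : ℝ) (hρ : 1 < ρ) (μ : Measure ℝ) [SFinite μ] (K : ℝ → ℝ → ℝ≥0∞)
    (hK : Measurable (Function.uncurry K)) :
    (∫⁻ x, (∫⁻ s, K s x ∂μ) ^ ρ) ^ (1 / ρ) ≤ ∫⁻ s, (∫⁻ x, K s x ^ ρ) ^ (1 / ρ) ∂μ := by
  set B := ∫⁻ s, (∫⁻ x, K s x ^ ρ) ^ (1 / ρ) ∂μ with hB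
  set G : ℝ → ℝ≥0∞ := fun x => ∫⁻ s, K s x ∂μ with hG
  have hGm : Measurable G := Measurable.lintegral_prod_left hK
  have hρ0 : 0 < ρ := by linarith
  let T : ℕ → ℝ → ℝ≥0∞ := fun n => (Icc (-(n : ℝ)) n).indicator (fun x => min (G x) n)
  have hTm : ∀ n, Measurable (T n) := fun n =>
    (hGm.min measurable_const).indicator measurableSet_Icc
  have hTG : ∀ n x, T n x ≤ G x := fun n x => by
    simp only [T, indicator]; split_ifs
    · exact min_le_left _ _
    · exact zero_le
  have hTn : ∀ n x, T n x ≤ (Icc (-(n : ℝ)) n).indicator (fun x => (n : ℝ≥0∞)) x := fun n x => by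
    simp only [T, indicator]; split_ifs
    · exact min_le_right _ _
    · exact le_rfl
  have conj : Real.HolderConjugate (Real.conjExponent ρ) ρ := (Real.HolderConjugate.conjExponent hρ).symm
  set ρ' := Real.conjExponent ρ with hρ'
  have hρ'0 : 0 < ρ' := conj.pos
  have hmul : (ρ - 1) * ρ' = ρ := by
    rw [hρ', Real.conjExponent]; field_simp
    exact div_self (by linarith)
  have hinv : 1 / ρ' + 1 / ρ = 1 := by simpa using conj.inv_add_inv_eq_one
  have main : ∀ n, ∫⁻ x, T n x ^ ρ ≤ B ^ ρ := by
    intro n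
    set A := ∫⁻ x, T n x ^ ρ with hA
    have hAfin : A ≠ ∞ := by
      apply ne_top_of_le_ne_top (b := (n : ℝ≥0∞) ^ ρ * volume (Icc (-(n : ℝ)) n))
      · apply ENNReal.mul_ne_top
        · exact ENNReal.rpow_ne_top_of_nonneg hρ0.le (by simp)
        · simp
      · rw [← setLIntegral_const, ← lintegral_indicator measurableSet_Icc]
        apply lintegral_mono
        intro x
        refine (ENNReal.rpow_le_rpow (hTn n x) hρ0.le).trans ?_
        simp only [indicator]; split_ifs
        · exact le_rfl
        · simp [hρ0]
    have h1 : A ≤ A ^ (1 / ρ') * B := by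
      calc A = ∫⁻ x, T n x ^ (ρ - 1) * T n x := by
            apply lintegral_congr; intro x
            conv_rhs => rw [← ENNReal.rpow_one (T n x), ← ENNReal.rpow_mul, 
              ← ENNReal.rpow_add_of_nonneg _ _ (by linarith) (by norm_num)]
            congr 1; ring
        _ ≤ ∫⁻ x, T n x ^ (ρ - 1) * G x := by
            apply lintegral_mono; intro x; dsimp only; gcongr; exact hTG n x
        _ = ∫⁻ x, ∫⁻ s, T n x ^ (ρ - 1) * K s x ∂μ := by
            apply lintegral_congr; intro x
            rw [lintegral_const_mul]
            exact hK.comp (measurable_id.prodMk measurable_const)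
        _ = ∫⁻ s, ∫⁻ x, T n x ^ (ρ - 1) * K s x ∂volume ∂μ := by
            rw [lintegral_lintegral_swap]
            apply Measurable.aemeasurable
            exact (((hTm n).pow_const _).comp measurable_fst).mul (hK.comp measurable_swap)
        _ ≤ ∫⁻ s, A ^ (1 / ρ') * (∫⁻ x, K s x ^ ρ) ^ (1 / ρ) ∂μ := by
            apply lintegral_mono; intro s
            refine (ENNReal.lintegral_mul_le_Lp_mul_Lq volume conj
              ((hTm n).pow_const (ρ - 1)).aemeasurable
              (hK.comp (measurable_const.prodMk measurable_id) : Measurable fun x => K s x).aemeasurable).trans ?_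
            apply le_of_eq
            congr 2
            apply lintegral_congr; intro x
            rw [← ENNReal.rpow_mul, hmul]
        _ = _ := by
            rw [lintegral_const_mul]
            apply Measurable.pow_const
            exact Measurable.lintegral_prod_right (hK.pow_const ρ)
    by_cases hA0 : A = 0
    · rw [hA0]; exact zero_le
    have h2 : A ^ (1 / ρ) ≤ B := by
      have e : A = A ^ (1 / ρ') * A ^ (1 / ρ) := by
        rw [← ENNReal.rpow_add _ _ hA0 hAfin, hinv, ENNReal.rpow_one]
      nth_rewrite 1 [e] at h1
      refine (ENNReal.mul_le_mul_iff_right ?_ ?_).1 h1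
      · simp [hA0, hAfin]
      · exact ENNReal.rpow_ne_top_of_nonneg (by positivity) hAfin
    calc A = (A ^ (1 / ρ)) ^ ρ := by rw [← ENNReal.rpow_mul]; field_simp; simp
      _ ≤ _ := ENNReal.rpow_le_rpow h2 hρ0.le
  have lim : ∫⁻ x, G x ^ ρ ≤ B ^ ρ := by
    refine le_of_tendsto' (lintegral_tendsto_of_tendsto_of_monotone (f := fun n x => T n x ^ ρ) (F := fun x => G x ^ ρ)
      (fun n => ((hTm n).pow_const _).aemeasurable) ?_ ?_) main
    · refine Filter.Eventually.of_forall fun x n m hnm => ?_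
      apply ENNReal.rpow_le_rpow _ hρ0.le
      have hc : (n : ℝ) ≤ m := by exact_mod_cast hnm
      simp only [T, indicator, mem_Icc]
      split_ifs with h h'
      · gcongr
      · exact absurd ⟨by linarith [h.1], by linarith [h.2]⟩ h'
      · exact zero_le
      · exact zero_le
    · refine Filter.Eventually.of_forall fun x => ?_
      apply ((ENNReal.continuous_rpow_const).tendsto _).comp
      have h1 : Filter.Tendsto (fun n : ℕ => min (G x) (n : ℝ≥0∞)) Filter.atTop (nhds (min (G x) ∞)) :=
        tendsto_const_nhds.min ENNReal.tendsto_nat_nhds_top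
      rw [min_top_right] at h1
      refine h1.congr' ?_
      obtain ⟨k, hk⟩ := exists_nat_ge |x|
      filter_upwards [Filter.eventually_ge_atTop k] with n hn
      have : (k : ℝ) ≤ n := by exact_mod_cast hn
      have hx := abs_le.1 (hk.trans this)
      simp only [T]
      rw [indicator_of_mem (show x ∈ Icc (-(n : ℝ)) n from hx)]
  calc _ ≤ (B ^ ρ) ^ (1 / ρ) := ENNReal.rpow_le_rpow lim (by positivity)
    _ = B := by rw [← ENNReal.rpow_mul]; field_simp; simp

open scoped FourierTransform in
lemma fourier_nonint (h : ℝ → ℂ) (h1 : ¬ Integrable h) (ξ : ℝ) : 𝓕 h ξ = 0 := by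
  rw [Real.fourier_eq]
  apply integral_undef
  rwa [Real.fourierIntegral_convergent_iff]

open scoped FourierTransform in
lemma fourier_enorm_le (h : ℝ → ℂ) (ξ : ℝ) : ‖𝓕 h ξ‖ₑ ≤ ∫⁻ y, ‖h y‖ₑ := by
  rw [Real.fourier_eq]
  refine (enorm_integral_le_lintegral_enorm _).trans (le_of_eq ?_)
  apply lintegral_congr; intro y
  rw [Circle.smul_def, enorm_smul, ← ofReal_norm, Circle.norm_coe]
  simp

open scoped FourierTransform in
lemma hy_level (h : ℝ → ℂ) (hm : Measurable h) (hi : Integrable h) (p M l : ℝ) (hp : 1 < p)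
    (hM : 0 < M) (hl : 0 < l) (hN : ∫⁻ y, ‖h y‖ₑ ^ p = ENNReal.ofReal M) :
    volume {x | l < ‖𝓕 h x‖} ≤ ENNReal.ofReal (4 / l ^ 2) *
      ∫⁻ y, {y | ‖h y‖ ^ (p - 1) * l ≤ 2 * M}.indicator (fun y => ‖h y‖ₑ ^ (2 : ℝ)) y := by
  set S := {y | ‖h y‖ ^ (p - 1) * l ≤ 2 * M} with hS
  have hSm : MeasurableSet S := measurableSet_le (by fun_prop) measurable_const
  set h1 := S.indicator h with hh1
  set h0 := Sᶜ.indicator h with hh0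
  have hi1 : Integrable h1 := hi.indicator hSm
  have hi0 : Integrable h0 := hi.indicator hSm.compl
  have hsum : ∀ x, 𝓕 h x = 𝓕 h1 x + 𝓕 h0 x := by
    intro x
    have : h = h1 + h0 := (indicator_self_add_compl S h).symm
    rw [Real.fourier_eq, Real.fourier_eq, Real.fourier_eq, ← integral_add
      ((Real.fourierIntegral_convergent_iff x).2 hi1) ((Real.fourierIntegral_convergent_iff x).2 hi0)]
    congr 1; ext v
    rw [← smul_add]
    congr 1
    exact congrFun this v
  have b0 : ∀ x, ‖𝓕 h0 x‖ ≤ l / 2 := by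
    intro x
    have h2 : ‖𝓕 h0 x‖ₑ ≤ ENNReal.ofReal (l / 2) := by
      refine (fourier_enorm_le h0 x).trans ?_
      calc ∫⁻ y, ‖h0 y‖ₑ ≤ ∫⁻ y, ENNReal.ofReal (l / (2 * M)) * ‖h y‖ₑ ^ p := by
            apply lintegral_mono; intro y
            by_cases hy : y ∈ S
            · simp [hh0, hy]
            · simp only [hh0]
              rw [indicator_of_mem (show y ∈ Sᶜ from hy)]
              have hy' : 2 * M < ‖h y‖ ^ (p - 1) * l := not_le.1 hy
              rw [← ofReal_norm, ENNReal.ofReal_rpow_of_nonneg (norm_nonneg _) (by linarith),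
                ← ENNReal.ofReal_mul (by positivity)]
              apply ENNReal.ofReal_le_ofReal
              have e : ‖h y‖ ^ p = ‖h y‖ ^ (p - 1) * ‖h y‖ := by
                conv_rhs => rw [← Real.rpow_add_one' (norm_nonneg _) (by linarith)]
                congr 1; ring
              rw [e, div_mul_eq_mul_div, le_div_iff₀ (by positivity)]
              nlinarith [norm_nonneg (h y)]
        _ = ENNReal.ofReal (l / 2) := by
            rw [lintegral_const_mul _ (by fun_prop), hN, ← ENNReal.ofReal_mul (by positivity)]
            congr 1; field_simp
    rw [← ofReal_norm] at h2
    exact (ENNReal.ofReal_le_ofReal_iff (by positivity)).1 h2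
  have hL2 : MemLp h1 2 volume := by
    rw [memLp_two_iff_integrable_sq_norm hi1.1]
    refine Integrable.mono' (hi1.norm.const_mul ((2 * M / l) ^ (1 / (p - 1)))) (hi1.1.norm.pow 2) ?_
    refine Filter.Eventually.of_forall fun y => ?_
    rw [Real.norm_of_nonneg (by positivity), pow_two]
    apply mul_le_mul_of_nonneg_right _ (norm_nonneg _)
    by_cases hy : y ∈ S
    · simp only [hh1]
      rw [indicator_of_mem hy]
      have hy' : ‖h y‖ ^ (p - 1) ≤ 2 * M / l := (le_div_iff₀ hl).2 hy
      have := Real.rpow_le_rpow (by positivity) hy' (z := 1 / (p - 1)) (by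
        have : 0 < p - 1 := by linarith
        positivity)
      rwa [← Real.rpow_mul (norm_nonneg _), mul_one_div_cancel (by linarith), Real.rpow_one] at this
    · simp only [hh1]
      rw [indicator_of_notMem hy]; simp; positivity
  have hpl := plancherel_L1L2 h1 hi1 hL2
  have hcont := fourier_cont h1 hi1
  have cheb := mul_meas_ge_le_pow_eLpNorm (p := 2) volume (by norm_num) (by norm_num) 
    hcont.aestronglyMeasurable (ENNReal.ofReal ((l / 2) ^ 2))
  rw [hpl] at cheb
  have hn : eLpNorm h1 2 volume ^ (2 : ℝ≥0∞).toReal = ∫⁻ y, S.indicator (fun y => ‖h y‖ₑ ^ (2 : ℝ)) y := by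
    rw [eLpNorm_eq_lintegral_rpow_enorm_toReal (by norm_num) (by norm_num), ← ENNReal.rpow_mul]
    norm_num
    apply lintegral_congr; intro y
    by_cases hy : y ∈ S <;> simp [hh1, hy]
  rw [hn] at cheb
  have hsub : {x | l < ‖𝓕 h x‖} ⊆ {x | ENNReal.ofReal ((l / 2) ^ 2) ≤ ‖𝓕 h1 x‖ₑ ^ (2 : ℝ≥0∞).toReal} := by
    intro x hx
    simp only [mem_ofPred_eq] at hx ⊢
    rw [hsum] at hx
    have h3 : l / 2 ≤ ‖𝓕 h1 x‖ := by
      have := norm_add_le (𝓕 h1 x) (𝓕 h0 x)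
      linarith [b0 x]
    rw [← ofReal_norm, ENNReal.ofReal_rpow_of_nonneg (norm_nonneg _) (by norm_num)]
    apply ENNReal.ofReal_le_ofReal
    norm_num
    gcongr
  calc volume {x | l < ‖𝓕 h x‖} ≤ volume {x | ENNReal.ofReal ((l / 2) ^ 2) ≤ ‖𝓕 h1 x‖ₑ ^ (2 : ℝ≥0∞).toReal} := measure_mono hsub
    _ = ENNReal.ofReal (4 / l ^ 2) * (ENNReal.ofReal ((l / 2) ^ 2) * volume {x | ENNReal.ofReal ((l / 2) ^ 2) ≤ ‖𝓕 h1 x‖ₑ ^ (2 : ℝ≥0∞).toReal}) := by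
      rw [← mul_assoc, ← ENNReal.ofReal_mul (by positivity)]
      have : 4 / l ^ 2 * (l / 2) ^ 2 = 1 := by field_simp; norm_num
      rw [this]; simp
    _ ≤ _ := by gcongr

lemma inner_int (p r M v : ℝ) (hr : 2 < r) (hpr : p = r / (r - 1)) (hM : 0 < M) (hv : 0 ≤ v) :
    ∫⁻ l in Ioi (0:ℝ), ENNReal.ofReal (4 * l ^ (r - 3)) *
      (if v ^ (p - 1) * l ≤ 2 * M then ENNReal.ofReal (v ^ (2:ℝ)) else 0) ≤
     ENNReal.ofReal (4 / (r - 2) * (2 * M) ^ (r - 2)) * ENNReal.ofReal (v ^ p) := by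
  rcases hv.eq_or_lt with rfl | hv
  · simp
  set R := 2 * M * v ^ (1 - p) with hR
  have hR0 : 0 < R := by positivity
  have e1 : ∫⁻ l in Ioc 0 R, ENNReal.ofReal (4 * l ^ (r - 3)) = ENNReal.ofReal (4 / (r - 2) * R ^ (r - 2)) := by
    have hii : IntervalIntegrable (fun s : ℝ => 4 * s ^ (r - 3)) volume 0 R := 
      (intervalIntegral.intervalIntegrable_rpow' (by linarith)).const_mul 4
    rw [← ofReal_integral_eq_lintegral_ofReal, ← intervalIntegral.integral_of_le hR0.le,
      intervalIntegral.integral_const_mul,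
        integral_rpow (Or.inl (by linarith)), Real.zero_rpow (by linarith), show r - 3 + 1 = r - 2 by ring]
    · congr 1; ring
    · exact (intervalIntegrable_iff_integrableOn_Ioc_of_le hR0.le).1 hii
    · filter_upwards [ae_restrict_mem measurableSet_Ioc] with s hs
      have := Real.rpow_nonneg hs.1.le (r - 3)
      simp only [Pi.zero_apply]; positivity
  calc _ ≤ ∫⁻ l in Ioi (0:ℝ), (Ioc 0 R).indicator (fun l => ENNReal.ofReal (4 * l ^ (r - 3))) l * ENNReal.ofReal (v ^ (2:ℝ)) := by
        apply setLIntegral_mono' measurableSet_Ioi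
        intro l hl
        split_ifs with hc
        · rw [indicator_of_mem]
          refine ⟨hl, ?_⟩
          rw [hR, show 1 - p = -(p - 1) by ring, Real.rpow_neg hv.le, ← div_eq_mul_inv, le_div_iff₀ (by positivity)]
          linarith
        · simp
    _ = ENNReal.ofReal (4 / (r - 2) * R ^ (r - 2)) * ENNReal.ofReal (v ^ (2:ℝ)) := by
        rw [lintegral_mul_const _ ((by fun_prop : Measurable fun l : ℝ => ENNReal.ofReal (4 * l ^ (r - 3))).indicator measurableSet_Ioc),
          lintegral_indicator measurableSet_Ioc, Measure.restrict_restrict measurableSet_Ioc,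
          inter_eq_left.2 Ioc_subset_Ioi_self, e1]
    _ = _ := by
        have : 0 < r - 2 := by linarith
        rw [← ENNReal.ofReal_mul (by positivity), ← ENNReal.ofReal_mul (by positivity)]
        congr 1
        rw [hR, Real.mul_rpow (by positivity) (by positivity), ← Real.rpow_mul hv.le]
        have e2 : v ^ p = v ^ ((1 - p) * (r - 2)) * v ^ (2:ℝ) := by
          rw [← Real.rpow_add hv]
          congr 1
          have : r - 1 ≠ 0 := by linarith
          rw [hpr]; field_simp; ring
        rw [e2]; ring

open scoped FourierTransform in
lemma hausdorff_young (p r : ℝ) (hr : 2 < r) (hpr : p = r / (r - 1)) (h : ℝ → ℂ) (hm : Measurable h) :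
    ∫⁻ x, ‖𝓕 h x‖ₑ ^ r ≤ ENNReal.ofReal (r * (4 / (r - 2) * 2 ^ (r - 2))) * (∫⁻ y, ‖h y‖ₑ ^ p) ^ (r - 1) := by
  have hp : 1 < p := by rw [hpr, lt_div_iff₀ (by linarith)]; linarith
  have hr2 : 0 < r - 2 := by linarith
  by_cases hi : Integrable h
  swap
  · simp [fourier_nonint h hi, show 0 < r by linarith]
  by_cases htop : ∫⁻ y, ‖h y‖ₑ ^ p = ∞
  · rw [htop, ENNReal.top_rpow_of_pos (by linarith), ENNReal.mul_top]
    · exact le_top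
    · simp; positivity
  by_cases h0 : ∫⁻ y, ‖h y‖ₑ ^ p = 0
  · have hz : ∀ᵐ y, ‖h y‖ₑ = 0 := by
      rw [lintegral_eq_zero_iff (by fun_prop)] at h0
      filter_upwards [h0] with y hy
      simpa [show 0 < p by linarith, show ¬ p < 0 by linarith] using hy
    have : ∀ x, ‖𝓕 h x‖ₑ = 0 := by
      intro x
      apply le_antisymm _ zero_le
      refine (fourier_enorm_le h x).trans ?_
      rw [lintegral_congr_ae hz]; simp
    simp only [this]
    simp [show 0 < r by linarith]
  set M := (∫⁻ y, ‖h y‖ₑ ^ p).toReal with hM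
  have hM0 : 0 < M := ENNReal.toReal_pos h0 htop
  have hN : ∫⁻ y, ‖h y‖ₑ ^ p = ENNReal.ofReal M := (ENNReal.ofReal_toReal htop).symm
  have hcont := fourier_cont h hi
  calc ∫⁻ x, ‖𝓕 h x‖ₑ ^ r = ∫⁻ x, ENNReal.ofReal (‖𝓕 h x‖ ^ r) := by
        apply lintegral_congr; intro x
        rw [← ofReal_norm, ENNReal.ofReal_rpow_of_nonneg (norm_nonneg _) (by linarith)]
    _ = ENNReal.ofReal r * ∫⁻ t in Ioi (0:ℝ), volume {a | t < ‖𝓕 h a‖} * ENNReal.ofReal (t ^ (r - 1)) :=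
        lintegral_rpow_eq_lintegral_meas_lt_mul volume (Filter.Eventually.of_forall fun x => norm_nonneg _)
          hcont.norm.measurable.aemeasurable (by linarith)
    _ ≤ ENNReal.ofReal r * ∫⁻ t in Ioi (0:ℝ), ∫⁻ y, ENNReal.ofReal (4 * t ^ (r - 3)) *
      (if ‖h y‖ ^ (p - 1) * t ≤ 2 * M then ENNReal.ofReal (‖h y‖ ^ (2:ℝ)) else 0) := by
        gcongr ENNReal.ofReal r * ?_
        apply setLIntegral_mono' measurableSet_Ioi
        intro t (ht : 0 < t)
        rw [lintegral_const_mul _ (Measurable.ite (measurableSet_le (by fun_prop) measurable_const) (by fun_prop) measurable_const)]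
        refine (mul_le_mul_left (hy_level h hm hi p M t hp hM0 ht hN) _).trans (le_of_eq ?_)
        rw [mul_right_comm, ← ENNReal.ofReal_mul (by positivity)]
        congr 1
        · congr 1
          rw [show r - 1 = r - 3 + 2 by ring, Real.rpow_add ht, Real.rpow_two]
          field_simp
        · apply lintegral_congr; intro y
          simp only [indicator, mem_ofPred_eq]
          rw [← ofReal_norm, ENNReal.ofReal_rpow_of_nonneg (norm_nonneg _) (by norm_num)]
    _ = ENNReal.ofReal r * ∫⁻ y, ∫⁻ t in Ioi (0:ℝ), ENNReal.ofReal (4 * t ^ (r - 3)) *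
      (if ‖h y‖ ^ (p - 1) * t ≤ 2 * M then ENNReal.ofReal (‖h y‖ ^ (2:ℝ)) else 0) := by
        rw [lintegral_lintegral_swap]
        apply Measurable.aemeasurable
        apply Measurable.mul (by fun_prop)
        exact Measurable.ite (measurableSet_le (by fun_prop) measurable_const) (by fun_prop) measurable_const
    _ ≤ ENNReal.ofReal r * ∫⁻ y, ENNReal.ofReal (4 / (r - 2) * (2 * M) ^ (r - 2)) * ENNReal.ofReal (‖h y‖ ^ p) := by
        gcongr with y
        exact inner_int p r M _ hr hpr hM0 (norm_nonneg _)
    _ = ENNReal.ofReal r * (ENNReal.ofReal (4 / (r - 2) * (2 * M) ^ (r - 2)) * ENNReal.ofReal M) := by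
        rw [lintegral_const_mul _ (by fun_prop), ← hN]
        congr 3; ext y
        rw [← ofReal_norm, ENNReal.ofReal_rpow_of_nonneg (norm_nonneg _) (by linarith)]
    _ = _ := by
        rw [hN, ENNReal.ofReal_rpow_of_pos hM0, ← ENNReal.ofReal_mul (by positivity), ← ENNReal.ofReal_mul (by linarith),
          ← ENNReal.ofReal_mul (by positivity)]
        congr 1
        rw [Real.mul_rpow (by norm_num) hM0.le, show r - 1 = r - 2 + 1 by ring, Real.rpow_add_one hM0.ne']
        ring

/-- Majorant of the propagator. -/
def oscE (τ : ℝ) (f : ℝ → ℂ) (x : ℝ) : ℝ≥0∞ :=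
  ENNReal.ofReal ((4 * π * |τ|) ^ (-(1 / 2) : ℝ)) *
    ‖∫ y, Complex.exp (Complex.I * ((‖x - y‖ ^ 2 : ℝ) : ℂ) / (4 * (τ : ℂ))) * f y‖ₑ

lemma schrod_enorm (τ : ℝ) (hτ : τ ≠ 0) (f : ℝ → ℂ) (x : ℝ) :
    ‖schrod 1 τ f x‖ₑ = oscE τ f x := by
  rw [schrod, if_neg hτ, oscE, enorm_mul]
  congr 1
  rw [← ofReal_norm]
  congr 1
  have e : (-((1 : ℕ) : ℂ) / 2) = ((-(1 / 2) : ℝ) : ℂ) := by push_cast; ring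
  rw [e, Complex.norm_cpow_real]
  congr 1
  simp [abs_of_pos Real.pi_pos]

lemma exp_norm_one (c τ : ℝ) : ‖Complex.exp (Complex.I * (c : ℂ) / (4 * (τ : ℂ)))‖ = 1 := by
  rw [show Complex.I * (c : ℂ) / (4 * (τ : ℂ)) = ((c / (4 * τ) : ℝ) : ℂ) * Complex.I by push_cast; ring]
  exact Complex.norm_exp_ofReal_mul_I _

open scoped FourierTransform in
lemma osc_fourier (τ : ℝ) (hτ : τ ≠ 0) (f : ℝ → ℂ) (x : ℝ) :
    ‖∫ y, Complex.exp (Complex.I * ((‖x - y‖ ^ 2 : ℝ) : ℂ) / (4 * (τ : ℂ))) * f y‖ₑ =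
     ‖𝓕 (fun y : ℝ => Complex.exp (Complex.I * ((y ^ 2 : ℝ) : ℂ) / (4 * (τ : ℂ))) * f y) ((4 * π * τ)⁻¹ * x)‖ₑ := by
  have : ∫ y, Complex.exp (Complex.I * ((‖x - y‖ ^ 2 : ℝ) : ℂ) / (4 * (τ : ℂ))) * f y =
      Complex.exp (Complex.I * ((x ^ 2 : ℝ) : ℂ) / (4 * (τ : ℂ))) *
      𝓕 (fun y : ℝ => Complex.exp (Complex.I * ((y ^ 2 : ℝ) : ℂ) / (4 * (τ : ℂ))) * f y) ((4 * π * τ)⁻¹ * x) := by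
    rw [Real.fourier_real_eq, ← integral_const_mul]
    congr 1; ext y
    rw [Circle.smul_def, Real.fourierChar_apply, smul_eq_mul, ← mul_assoc, ← mul_assoc, ← Complex.exp_add, ← Complex.exp_add]
    congr 2
    rw [Real.norm_eq_abs, sq_abs]
    have h1 : (τ : ℂ) ≠ 0 := by exact_mod_cast hτ
    have h2 : (π : ℂ) ≠ 0 := by exact_mod_cast Real.pi_ne_zero
    push_cast
    field_simp
    ring
  rw [this, enorm_mul, ← ofReal_norm, exp_norm_one]
  simp

lemma lintegral_scale (c : ℝ) (hc : c ≠ 0) (g : ℝ → ℝ≥0∞) (hg : Measurable g) :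
    ∫⁻ x, g (c⁻¹ * x) = ENNReal.ofReal |c| * ∫⁻ x, g x := by
  rw [← lintegral_map hg (measurable_const_mul _), Real.map_volume_mul_left (inv_ne_zero hc),
    lintegral_smul_measure, inv_inv, smul_eq_mul]

open scoped FourierTransform in
lemma fourier_meas (h : ℝ → ℂ) : Measurable (𝓕 h) := by
  by_cases hi : Integrable h
  · exact (fourier_cont h hi).measurable
  · have : 𝓕 h = fun _ => 0 := by ext x; exact fourier_nonint h hi x
    rw [this]; exact measurable_const

lemma disp (r : ℝ) (hr : 2 < r) (τ : ℝ) (hτ : τ ≠ 0) (f : ℝ → ℂ) (hf : Measurable f) :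
    (∫⁻ x, oscE τ f x ^ r) ^ (1 / r) ≤
      ENNReal.ofReal ((r * (4 / (r - 2) * 2 ^ (r - 2))) ^ (1 / r) * (4 * π) ^ (-(1 / 2 - 1 / r)) * |τ| ^ (-(1 / 2 - 1 / r))) *
       (∫⁻ y, ‖f y‖ₑ ^ (r / (r - 1))) ^ (1 / (r / (r - 1))) := by
  have hr0 : 0 < r := by linarith
  have hr1 : 0 < r - 1 := by linarith
  have hr2 : 0 < r - 2 := by linarith
  set C0 := r * (4 / (r - 2) * 2 ^ (r - 2)) with hC0
  have hC : 0 < C0 := by positivity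
  have hτ' : 0 < |τ| := abs_pos.2 hτ
  have hπ := Real.pi_pos
  set h : ℝ → ℂ := fun y : ℝ => Complex.exp (Complex.I * ((y ^ 2 : ℝ) : ℂ) / (4 * (τ : ℂ))) * f y with hh
  have hhm : Measurable h := by
    apply Measurable.mul _ hf
    fun_prop
  have hhn : ∀ y, ‖h y‖ₑ = ‖f y‖ₑ := by
    intro y
    simp only [hh]
    rw [enorm_mul, ← ofReal_norm (Complex.exp _), exp_norm_one]; simp
  have HY := hausdorff_young (r / (r - 1)) r hr rfl h hhm
  simp only [hhn] at HY
  set N := ∫⁻ y, ‖f y‖ₑ ^ (r / (r - 1)) with hN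
  set w := (4 * π * |τ|) with hw
  have hw0 : 0 < w := by positivity
  have e : ∫⁻ x, oscE τ f x ^ r ≤ ENNReal.ofReal ((w ^ (-(1/2) : ℝ)) ^ r) * (ENNReal.ofReal w * (ENNReal.ofReal C0 * N ^ (r - 1))) := by
    calc ∫⁻ x, oscE τ f x ^ r = ∫⁻ x, ENNReal.ofReal ((w ^ (-(1/2) : ℝ)) ^ r) * (fun z => ‖FourierTransform.fourier h z‖ₑ ^ r) ((4 * π * τ)⁻¹ * x) := by
          apply lintegral_congr; intro x
          rw [oscE, osc_fourier τ hτ, ENNReal.mul_rpow_of_nonneg _ _ hr0.le, ENNReal.ofReal_rpow_of_nonneg (by positivity) hr0.le]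
      _ = ENNReal.ofReal ((w ^ (-(1/2) : ℝ)) ^ r) * (ENNReal.ofReal w * ∫⁻ x, ‖FourierTransform.fourier h x‖ₑ ^ r) := by
          have hgm : Measurable (fun z => ‖FourierTransform.fourier h z‖ₑ ^ r) := (fourier_meas h).enorm.pow_const _
          have hgm' : Measurable (fun x => (fun z => ‖FourierTransform.fourier h z‖ₑ ^ r) ((4 * π * τ)⁻¹ * x)) :=
            hgm.comp (measurable_const_mul _)
          rw [lintegral_const_mul _ hgm', lintegral_scale _ (by positivity) _ hgm]
          congr 3
          rw [abs_mul, abs_of_pos (by positivity : 0 < 4 * π)]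
      _ ≤ _ := by gcongr
  refine (ENNReal.rpow_le_rpow e (by positivity)).trans (le_of_eq ?_)
  rw [← mul_assoc, ← mul_assoc, ENNReal.mul_rpow_of_nonneg _ _ (by positivity), ← ENNReal.rpow_mul,
    ← ENNReal.ofReal_mul (by positivity), ← ENNReal.ofReal_mul (by positivity), ENNReal.ofReal_rpow_of_nonneg (by positivity) (by positivity)]
  congr 2
  · rw [Real.mul_rpow (by positivity) (by positivity), Real.mul_rpow (by positivity) (by positivity), ← Real.rpow_mul (by positivity),
      mul_one_div_cancel hr0.ne', Real.rpow_one, ← Real.rpow_add hw0, mul_assoc, ← Real.mul_rpow (by positivity) (by positivity), ← hw,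
      show -(1 / 2 - 1 / r) = -(1/2) + 1 / r by ring]
    ring
  · rw [one_div_div]; ring

lemma oscE_le (τ : ℝ) (f : ℝ → ℂ) (x : ℝ) :
    oscE τ f x ≤ ENNReal.ofReal ((4 * π * |τ|) ^ (-(1 / 2) : ℝ)) * ∫⁻ y, ‖f y‖ₑ := by
  rw [oscE]
  gcongr
  refine (enorm_integral_le_lintegral_enorm _).trans (le_of_eq ?_)
  apply lintegral_congr; intro y
  rw [enorm_mul, ← ofReal_norm (Complex.exp _), exp_norm_one]; simp

lemma nonlin_meas (u : ℝ → ℝ → ℂ) (hu : Measurable (Function.uncurry u)) :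
    Measurable (fun z : ℝ × ℝ => nonlin 4 (u z.1) z.2) := by
  have : Measurable (fun z : ℝ × ℝ => u z.1 z.2) := hu
  unfold nonlin
  fun_prop

lemma oscE_meas (t : ℝ) (F : ℝ → ℝ → ℂ) (hF : Measurable (fun z : ℝ × ℝ => F z.1 z.2)) :
    Measurable (Function.uncurry fun s x => oscE (t - s) (F s) x) := by
  unfold oscE Function.uncurry
  dsimp only
  refine Measurable.fun_mul (by fun_prop) ?_
  apply Measurable.enorm
  apply StronglyMeasurable.measurable
  apply StronglyMeasurable.integral_prod_right' (f := fun q : (ℝ × ℝ) × ℝ => Complex.exp (Complex.I * ((‖q.1.2 - q.2‖ ^ 2 : ℝ) : ℂ) / (4 * ((t - q.1.1 : ℝ) : ℂ))) * F q.1.1 q.2)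
  apply Measurable.stronglyMeasurable
  apply Measurable.mul (by fun_prop)
  exact hF.comp ((measurable_fst.comp measurable_fst).prodMk measurable_snd)

lemma duhamel (r : ℝ≥0∞) (hr : 2 < r) : ∃ C : ℝ, 0 < C ∧ ∀ (t : ℝ) (I : Set ℝ) (F : ℝ → ℝ → ℂ),
    Measurable (fun z : ℝ × ℝ => F z.1 z.2) →
    eLpNorm (fun x => ∫ s in I, schrod 1 (t - s) (F s) x) r volume ≤
      ∫⁻ s in I, ENNReal.ofReal (C * |t - s| ^ (-(1 / 2 - r⁻¹.toReal))) * eLpNorm (F s) (1 - r⁻¹)⁻¹ volume := by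
  have hπ := Real.pi_pos
  have hne : ∀ (t : ℝ) (I : Set ℝ), ∀ᵐ s ∂(volume.restrict I), t - s ≠ 0 := by
    intro t I
    have : ∀ᵐ s ∂(volume : Measure ℝ), s ≠ t := by simp [ae_iff]
    filter_upwards [ae_restrict_of_ae this] with s hs
    exact sub_ne_zero.2 hs.symm
  have hpt : ∀ (t : ℝ) (I : Set ℝ) (F : ℝ → ℝ → ℂ) (x : ℝ), ‖∫ s in I, schrod 1 (t - s) (F s) x‖ₑ ≤ ∫⁻ s in I, oscE (t - s) (F s) x := by
    intro t I F x
    refine (enorm_integral_le_lintegral_enorm _).trans (le_of_eq ?_)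
    apply lintegral_congr_ae
    filter_upwards [hne t I] with s hs
    exact schrod_enorm _ hs _ _
  rcases eq_or_ne r ∞ with rfl | hrt
  · refine ⟨(4 * π) ^ (-(1 / 2) : ℝ), by positivity, fun t I F hF => ?_⟩
    rw [eLpNorm_exponent_top]
    refine eLpNormEssSup_le_of_ae_enorm_bound (Filter.Eventually.of_forall fun x => ?_)
    refine (hpt t I F x).trans (lintegral_mono fun s => ?_)
    refine (oscE_le _ _ _).trans (le_of_eq ?_)
    simp only [ENNReal.inv_top, tsub_zero, inv_one, eLpNorm_one_eq_lintegral_enorm, ENNReal.toReal_zero]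
    rw [Real.mul_rpow (by positivity) (by positivity)]
  · set ρ := r.toReal with hρ
    have hρr : r = ENNReal.ofReal ρ := (ENNReal.ofReal_toReal hrt).symm
    have hρ2 : 2 < ρ := by
      have := (ENNReal.toReal_lt_toReal (by norm_num) hrt).2 hr
      simpa using this
    have hr0 : r ≠ 0 := by rintro rfl; simp at hr
    have hinv : r⁻¹.toReal = 1 / ρ := by rw [ENNReal.toReal_inv]; simp [hρ]
    have hr' : (1 - r⁻¹)⁻¹ = ENNReal.ofReal (ρ / (ρ - 1)) := by
      rw [hρr, ← ENNReal.ofReal_inv_of_pos (by linarith), ← ENNReal.ofReal_one, ← ENNReal.ofReal_sub _ (by positivity),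
        ← ENNReal.ofReal_inv_of_pos]
      · congr 1
        have : ρ - 1 ≠ 0 := by linarith
        have : 1 - ρ⁻¹ = (ρ - 1) / ρ := by field_simp
        rw [this, inv_div]
      · rw [sub_pos]; apply inv_lt_one_of_one_lt₀; linarith
    have hρ20 : 0 < ρ - 2 := by linarith
    refine ⟨(ρ * (4 / (ρ - 2) * 2 ^ (ρ - 2))) ^ (1 / ρ) * (4 * π) ^ (-(1 / 2 - 1 / ρ)), by positivity, fun t I F hF => ?_⟩
    rw [eLpNorm_eq_lintegral_rpow_enorm_toReal hr0 hrt, ← hρ]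
    calc (∫⁻ x, ‖∫ s in I, schrod 1 (t - s) (F s) x‖ₑ ^ ρ) ^ (1 / ρ)
        ≤ (∫⁻ x, (∫⁻ s in I, oscE (t - s) (F s) x) ^ ρ) ^ (1 / ρ) := by
          gcongr with x
          exact hpt t I F x
      _ ≤ ∫⁻ s in I, (∫⁻ x, oscE (t - s) (F s) x ^ ρ) ^ (1 / ρ) :=
          mink ρ (by linarith) _ _ (oscE_meas t F hF)
      _ ≤ _ := by
          apply lintegral_mono_ae
          filter_upwards [hne t I] with s hs
          refine (disp ρ hρ2 _ hs (F s) (hF.comp (measurable_const.prodMk measurable_id))).trans (le_of_eq ?_)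
          have hpos : 0 < ρ / (ρ - 1) := div_pos (by linarith) (by linarith)
          rw [hr', hinv, eLpNorm_eq_lintegral_rpow_enorm_toReal (by simpa using hpos) (by simp), ENNReal.toReal_ofReal hpos.le]

lemma cake4 (g : ℝ≥0∞) :
    g ^ 4 ≤ ∫⁻ l in Ioi (0 : ℝ), if ENNReal.ofReal l < g then ENNReal.ofReal (4 * l ^ 3) else 0 := by
  set X := ∫⁻ l in Ioi (0 : ℝ), if ENNReal.ofReal l < g then ENNReal.ofReal (4 * l ^ 3) else 0 with hX
  have key : ∀ R : ℝ, 0 ≤ R → ENNReal.ofReal R ≤ g → ENNReal.ofReal (R ^ 4) ≤ X := by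
    intro R hR hRg
    have e : ∫⁻ l in Ioo 0 R, ENNReal.ofReal (4 * l ^ 3) = ENNReal.ofReal (R ^ 4) := by
      rw [restrict_Ioo_eq_restrict_Ioc, ← ofReal_integral_eq_lintegral_ofReal, ← intervalIntegral.integral_of_le hR,
        intervalIntegral.integral_const_mul, integral_pow]
      · congr 1; norm_num; ring
      · exact (intervalIntegrable_iff_integrableOn_Ioc_of_le hR).1
          (Continuous.intervalIntegrable (by fun_prop) _ _)
      · filter_upwards [ae_restrict_mem measurableSet_Ioc] with s hs
        have := hs.1
        simp only [Pi.zero_apply]; positivity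
    rw [← e, hX]
    calc ∫⁻ l in Ioo 0 R, ENNReal.ofReal (4 * l ^ 3) 
        = ∫⁻ l in Ioo 0 R, if ENNReal.ofReal l < g then ENNReal.ofReal (4 * l ^ 3) else 0 := by
          apply setLIntegral_congr_fun measurableSet_Ioo
          intro l hl
          have : ENNReal.ofReal l < g := ((ENNReal.ofReal_lt_ofReal_iff (hl.1.trans hl.2)).2 hl.2).trans_le hRg
          simp only [this, if_true]
      _ ≤ _ := lintegral_mono_set Ioo_subset_Ioi_self
  rcases eq_or_ne g ∞ with hg | hg
  · have : X = ∞ := by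
      apply ENNReal.eq_top_of_forall_nnreal_le
      intro c
      refine le_trans ?_ (key (c + 1) (by positivity) (by simp [hg]))
      rw [← ENNReal.ofReal_coe_nnreal]
      apply ENNReal.ofReal_le_ofReal
      have hc : (0 : ℝ) ≤ c := c.2
      nlinarith [pow_nonneg hc 2, pow_nonneg hc 3, pow_nonneg hc 4]
    rw [this]; exact le_top
  · have := key g.toReal ENNReal.toReal_nonneg (by rw [ENNReal.ofReal_toReal hg])
    rwa [ENNReal.ofReal_pow ENNReal.toReal_nonneg, ENNReal.ofReal_toReal hg] at this

lemma lorentz_holder (a : ℝ) (ha0 : 0 < a) (ha1 : a < 1) (t : ℝ) (I : Set ℝ)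
    (g : ℝ → ℝ≥0∞) (hg : Measurable g) :
    ∫⁻ s in I, ENNReal.ofReal (|t - s| ^ (-a)) * g s ^ 4 ≤
      ENNReal.ofReal (4 * (2 / (1 - a) + 1)) * ∫⁻ l in Ioi (0 : ℝ),
        (ENNReal.ofReal l * (volume.restrict I) {x | ENNReal.ofReal l < g x} ^ ((1 - a) / 4)) ^ (4 : ℝ) /
          ENNReal.ofReal l := by
  have ha' : 0 < 1 - a := by linarith
  have hm2 : Measurable (fun z : ℝ × ℝ => if ENNReal.ofReal z.2 < g z.1 then ENNReal.ofReal (4 * z.2 ^ 3) else 0) :=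
    Measurable.ite (measurableSet_lt (by fun_prop) (by fun_prop)) (by fun_prop) measurable_const
  calc ∫⁻ s in I, ENNReal.ofReal (|t - s| ^ (-a)) * g s ^ 4
      ≤ ∫⁻ s in I, ∫⁻ l in Ioi (0 : ℝ), ENNReal.ofReal (|t - s| ^ (-a)) * 
          (if ENNReal.ofReal l < g s then ENNReal.ofReal (4 * l ^ 3) else 0) := by
        apply lintegral_mono; intro s
        dsimp only
        have hm3 : Measurable fun l => if ENNReal.ofReal l < g s then ENNReal.ofReal (4 * l ^ 3) else 0 :=
          hm2.comp (measurable_const.prodMk measurable_id)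
        rw [lintegral_const_mul _ hm3]
        gcongr
        exact cake4 (g s)
    _ = ∫⁻ l in Ioi (0 : ℝ), ∫⁻ s in I, ENNReal.ofReal (|t - s| ^ (-a)) * 
          (if ENNReal.ofReal l < g s then ENNReal.ofReal (4 * l ^ 3) else 0) := by
        rw [lintegral_lintegral_swap]
        apply Measurable.aemeasurable
        exact Measurable.mul (by fun_prop) hm2
    _ ≤ ∫⁻ l in Ioi (0 : ℝ), ENNReal.ofReal (4 * (2 / (1 - a) + 1)) * ((ENNReal.ofReal l * (volume.restrict I) {x | ENNReal.ofReal l < g x} ^ ((1 - a) / 4)) ^ (4 : ℝ) /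
          ENNReal.ofReal l) := by
        apply setLIntegral_mono' measurableSet_Ioi
        intro l (hl : 0 < l)
        have hS : MeasurableSet {x | ENNReal.ofReal l < g x} := measurableSet_lt measurable_const hg
        calc ∫⁻ s in I, ENNReal.ofReal (|t - s| ^ (-a)) * 
          (if ENNReal.ofReal l < g s then ENNReal.ofReal (4 * l ^ 3) else 0) 
            = ∫⁻ s in I, ENNReal.ofReal (4 * l ^ 3) * {x | ENNReal.ofReal l < g x}.indicator (fun s => ENNReal.ofReal (|t - s| ^ (-a))) s := by
              apply lintegral_congr; intro s
              simp only [indicator, mem_ofPred_eq]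
              split_ifs
              · rw [mul_comm]
              · simp
          _ = ENNReal.ofReal (4 * l ^ 3) * ∫⁻ s in {x | ENNReal.ofReal l < g x} ∩ I, ENNReal.ofReal (|t - s| ^ (-a)) := by
              rw [lintegral_const_mul _ ((by fun_prop : Measurable fun s : ℝ => ENNReal.ofReal (|t - s| ^ (-a))).indicator hS),
                lintegral_indicator hS, Measure.restrict_restrict hS]
          _ ≤ ENNReal.ofReal (4 * l ^ 3) * (ENNReal.ofReal (2 / (1 - a) + 1) * volume ({x | ENNReal.ofReal l < g x} ∩ I) ^ (1 - a)) := by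
              gcongr
              exact weight_bound a ha0 ha1 t _
          _ = _ := by
              rw [Measure.restrict_apply hS, ENNReal.mul_rpow_of_nonneg _ _ (by norm_num), ← ENNReal.rpow_mul,
                show (1 - a) / 4 * 4 = 1 - a by ring, ENNReal.ofReal_rpow_of_pos hl, div_eq_mul_inv (_ * _), mul_right_comm _ _ (ENNReal.ofReal l)⁻¹, ← div_eq_mul_inv,
                ← ENNReal.ofReal_div_of_pos hl, ← mul_assoc, ← mul_assoc,
                ← ENNReal.ofReal_mul (by positivity), ← ENNReal.ofReal_mul (by positivity)]
              congr 2
              rw [show (4 : ℝ) = ((4 : ℕ) : ℝ) by norm_num, Real.rpow_natCast]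
              field_simp
    _ = _ := by
        rw [lintegral_const_mul' _ _ ENNReal.ofReal_ne_top]

lemma nonlin_holder (r q r' : ℝ≥0∞) (h : 4 * q⁻¹ + r⁻¹ = r'⁻¹) (v : ℝ → ℂ) (hv : Measurable v) :
    eLpNorm (nonlin 4 v) r' volume ≤ eLpNorm v q volume ^ 4 * eLpNorm v r volume := by
  have : ENNReal.HolderTriple (q / 4) r r' := ⟨by
    rw [← h, ENNReal.inv_div (by simp) (by simp), div_eq_mul_inv]⟩
  have h1 := eLpNorm_smul_le_mul_eLpNorm (p := q / 4) (q := r) (r := r') (μ := volume) (f := v) hv.aestronglyMeasurable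
    (φ := fun x => ((‖v x‖ ^ (4 : ℝ) : ℝ) : ℂ)) (by
      apply Measurable.aestronglyMeasurable
      fun_prop)
  have h2 : eLpNorm (fun x => ((‖v x‖ ^ (4 : ℝ) : ℝ) : ℂ)) (q / 4) volume = eLpNorm v q volume ^ 4 := by
    have := eLpNorm_norm_rpow (p := q / 4) (q := 4) (μ := volume) v (by norm_num)
    rw [show ENNReal.ofReal 4 = 4 by norm_num, ENNReal.div_mul_cancel (by simp) (by simp)] at this
    rw [show eLpNorm v q volume ^ 4 = eLpNorm v q volume ^ (4 : ℝ) by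
      rw [show (4 : ℝ) = ((4 : ℕ) : ℝ) by norm_num, ENNReal.rpow_natCast], ← this]
    apply eLpNorm_congr_norm_ae
    refine Filter.Eventually.of_forall fun x => ?_
    simp
  rw [h2] at h1
  exact h1


/-- **One-dimensional late-time Duhamel estimate.**  Fix `2 < r ≤ ∞`.  For any `t > 0`, any
measurable interval `I ⊆ [t/2, t]`, and any measurable `u` on `I × ℝ`,
`‖∫_I e^{i(t-s)Δ}(|u|⁴u)(s) ds‖_{L^r_x} ≤ C t^{-(1/2-1/r)}
  (sup_{s∈I} s^{1/2-1/r} ‖u(s)‖_{L^r_x}) ‖u‖⁴_{L^{8r/(r+2),4}_s L^{4r/(r-2)}_x(I×ℝ)}`,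
with `C = C(r)`.  The exponents are encoded via their reciprocals `(r+2)/(8r) = 1/8 + 1/(4r)`
and `(r-2)/(4r) = 1/4 - 1/(2r)`, which for `r = ∞` give `8` and `4` respectively. -/
theorem late_time_duhamel_1d (r : ℝ≥0∞) (hr : 2 < r) :
    ∃ C : ℝ, 0 < C ∧
      ∀ t : ℝ, 0 < t →
        ∀ I : Set ℝ, MeasurableSet I → I.OrdConnected → I ⊆ Set.Icc (t / 2) t →
          ∀ u : ℝ → ℝ → ℂ, Measurable (Function.uncurry u) →
            eLpNorm (fun x => ∫ s in I, schrod 1 (t - s) (nonlin 4 (u s)) x) r volume ≤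
              ENNReal.ofReal (C * t ^ (-(1 / 2 - 1 / r).toReal)) *
                (⨆ s ∈ I, ENNReal.ofReal (s ^ (1 / 2 - 1 / r).toReal) *
                  eLpNorm (u s) r volume) *
                lorentzMixedNorm volume I (1 / 8 + 1 / (4 * r))⁻¹ 4
                    (1 / 4 - 1 / (2 * r))⁻¹ u ^ 4 := by
  have h2r : r⁻¹ < 2⁻¹ := ENNReal.inv_lt_inv.2 hr
  have hrf : r⁻¹ ≠ ∞ := h2r.ne_top
  set b := r⁻¹.toReal with hb
  have hb0 : 0 ≤ b := ENNReal.toReal_nonneg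
  have hb1 : b < 1 / 2 := by
    have := (ENNReal.toReal_lt_toReal hrf (by simp)).2 h2r
    rw [← hb] at this
    simpa using this
  have hrb : r⁻¹ = ENNReal.ofReal b := (ENNReal.ofReal_toReal hrf).symm
  have o2 : (2 : ℝ≥0∞)⁻¹ = ENNReal.ofReal (1 / 2) := by
    rw [one_div, ENNReal.ofReal_inv_of_pos (by norm_num)]; norm_num
  have o4 : (4 : ℝ≥0∞)⁻¹ = ENNReal.ofReal (1 / 4) := by
    rw [one_div, ENNReal.ofReal_inv_of_pos (by norm_num)]; norm_num
  have o8 : (8 : ℝ≥0∞)⁻¹ = ENNReal.ofReal (1 / 8) := by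
    rw [one_div, ENNReal.ofReal_inv_of_pos (by norm_num)]; norm_num
  have ea : (1 / 2 - 1 / r).toReal = 1 / 2 - b := by
    rw [one_div, one_div, hrb, o2, ← ENNReal.ofReal_sub _ hb0, ENNReal.toReal_ofReal (by linarith)]
  have eP : 1 / 8 + 1 / (4 * r) = ENNReal.ofReal (1 / 8 + b / 4) := by
    rw [one_div, one_div, ENNReal.mul_inv (by simp) (by simp), hrb, o8, o4, ← ENNReal.ofReal_mul (by norm_num),
      ← ENNReal.ofReal_add (by norm_num) (by positivity)]
    congr 1; ring
  have eq : 1 / 4 - 1 / (2 * r) = ENNReal.ofReal (1 / 4 - b / 2) := by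
    rw [one_div, one_div, ENNReal.mul_inv (by simp) (by simp), hrb, o4, o2, ← ENNReal.ofReal_mul (by norm_num),
      ← ENNReal.ofReal_sub _ (by positivity)]
    congr 1; ring
  obtain ⟨C, hC, hD⟩ := duhamel r hr
  rw [ea, eP, eq]
  set a := 1 / 2 - b with ha
  have ha0 : 0 < a := by linarith
  have ha1 : a < 1 := by linarith
  have ha' : 0 < 1 - a := by linarith
  set q := (ENNReal.ofReal (1 / 4 - b / 2))⁻¹ with hq
  have hq0 : q ≠ 0 := by simp [hq]
  have hqt : q ≠ ∞ := by
    simp only [hq, ne_eq, ENNReal.inv_eq_top, ENNReal.ofReal_eq_zero, not_le]; linarith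
  refine ⟨C * 2 ^ a * (4 * (2 / (1 - a) + 1)), by positivity, ?_⟩
  intro t ht I hI _ hIt u hu
  set M := ⨆ s ∈ I, ENNReal.ofReal (s ^ a) * eLpNorm (u s) r volume with hM
  set g : ℝ → ℝ≥0∞ := fun s => eLpNorm (u s) q volume with hg
  have hgm : Measurable g := by
    simp only [hg, eLpNorm_eq_lintegral_rpow_enorm_toReal hq0 hqt]
    apply Measurable.pow_const
    exact Measurable.lintegral_prod_right (hu.enorm.pow_const q.toReal)
  set J := ∫⁻ l in Ioi (0 : ℝ),
        (ENNReal.ofReal l * (volume.restrict I) {x | ENNReal.ofReal l < g x} ^ ((1 - a) / 4)) ^ (4 : ℝ) /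
          ENNReal.ofReal l with hJ
  have hLor : J ≤ lorentzMixedNorm volume I (ENNReal.ofReal (1 / 8 + b / 4))⁻¹ 4 q u ^ 4 := by
    rw [lorentzMixedNorm, lorentzNorm, if_neg (by simp), ← ENNReal.rpow_natCast, ← ENNReal.rpow_mul,
      inv_inv, ENNReal.toReal_ofReal (by positivity), ENNReal.toReal_inv]
    norm_num only [ENNReal.toReal_ofNat]
    rw [ENNReal.rpow_one, hJ, show (1 - a) / 4 = 1 / 8 + b / 4 by rw [ha]; ring]
    apply le_mul_of_one_le_left zero_le
    rw [ENNReal.one_le_inv, ENNReal.ofReal_le_one]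
    linarith
  have hs : ∀ s ∈ I, eLpNorm (u s) r volume ≤ ENNReal.ofReal (2 ^ a * t ^ (-a)) * M := by
    intro s hsI
    have hst := (hIt hsI).1
    have hs0 : 0 < s := by linarith
    calc eLpNorm (u s) r volume = ENNReal.ofReal (s ^ (-a)) * (ENNReal.ofReal (s ^ a) * eLpNorm (u s) r volume) := by
          rw [← mul_assoc, ← ENNReal.ofReal_mul (by positivity), ← Real.rpow_add hs0]
          simp
      _ ≤ ENNReal.ofReal (2 ^ a * t ^ (-a)) * M := by
          gcongr
          · calc s ^ (-a) ≤ (t / 2) ^ (-a) := Real.rpow_le_rpow_of_nonpos (by linarith) hst (by linarith)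
              _ = 2 ^ a * t ^ (-a) := by
                rw [Real.div_rpow ht.le (by norm_num), Real.rpow_neg (by norm_num : (0:ℝ) ≤ 2)]
                field_simp
          · exact le_iSup₂ (f := fun s _ => ENNReal.ofReal (s ^ a) * eLpNorm (u s) r volume) s hsI
  have hexp : 4 * q⁻¹ + r⁻¹ = ((1 - r⁻¹)⁻¹)⁻¹ := by
    rw [hq, inv_inv, inv_inv, hrb, show (4 : ℝ≥0∞) = ENNReal.ofReal 4 by norm_num, ← ENNReal.ofReal_one,
      ← ENNReal.ofReal_mul (by norm_num), ← ENNReal.ofReal_sub _ hb0, ← ENNReal.ofReal_add (by linarith) hb0]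
    congr 1; ring
  calc _ ≤ _ := hD t I (fun s => nonlin 4 (u s)) (nonlin_meas u hu)
    _ ≤ ∫⁻ s in I, (ENNReal.ofReal C * (ENNReal.ofReal (2 ^ a * t ^ (-a)) * M)) * (ENNReal.ofReal (|t - s| ^ (-a)) * g s ^ 4) := by
        apply setLIntegral_mono' hI
        intro s hsI
        have h1 := nonlin_holder r q (1 - r⁻¹)⁻¹ hexp (u s) (hu.comp (measurable_const.prodMk measurable_id))
        calc _ ≤ ENNReal.ofReal (C * |t - s| ^ (-a)) * (g s ^ 4 * (ENNReal.ofReal (2 ^ a * t ^ (-a)) * M)) := by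
              refine mul_le_mul_right (h1.trans ?_) _
              exact mul_le_mul_right (hs s hsI) _
          _ = _ := by
              rw [ENNReal.ofReal_mul hC.le]; ring
    _ = (ENNReal.ofReal C * (ENNReal.ofReal (2 ^ a * t ^ (-a)) * M)) * ∫⁻ s in I, (ENNReal.ofReal (|t - s| ^ (-a)) * g s ^ 4) := by
        rw [lintegral_const_mul _ (by fun_prop)]
    _ ≤ (ENNReal.ofReal C * (ENNReal.ofReal (2 ^ a * t ^ (-a)) * M)) * (ENNReal.ofReal (4 * (2 / (1 - a) + 1)) * J) := by
        gcongr
        exact lorentz_holder a ha0 ha1 t I g hgm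
    _ ≤ (ENNReal.ofReal C * (ENNReal.ofReal (2 ^ a * t ^ (-a)) * M)) * (ENNReal.ofReal (4 * (2 / (1 - a) + 1)) * lorentzMixedNorm volume I (ENNReal.ofReal (1 / 8 + b / 4))⁻¹ 4 q u ^ 4) := by
        gcongr
    _ = _ := by
        rw [show C * 2 ^ a * (4 * (2 / (1 - a) + 1)) * t ^ (-a) = C * (2 ^ a * t ^ (-a)) * (4 * (2 / (1 - a) + 1)) by ring,
          ENNReal.ofReal_mul (p := C * (2 ^ a * t ^ (-a))) (by positivity), ENNReal.ofReal_mul (p := C) hC.le]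
        ring
end
end
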